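/- arXiv:0903.2917 — 4 statements merged into one kernel-verified Lean document; each statement's English description precedes it below -/
import Mathlib

section
/- Let a and b be positive elements in a C*-algebra A and suppose that a ≺_s b. Then for each ε > 0 there exists δ > 0 such that (a−ε)₊ ≺_s (b−δ)₊. -/
/-!
Put `N = k + 2`, where `a ⊗ 1_N ≾ b ⊗ 1_(N - 1)`. Some rectangular matrix `x` brings
`xᴴ (b ⊗ 1) x` within `ε` of `α := a ⊗ 1_N`; since `(b - δ)₊ → b` as `δ → 0`
(`tendsto_cutoff`), the same `x` still does so with `(b - δ)₊` in place of `b`, for some `δ > 0`.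
The rest is Rørdam's perturbation lemma (`exists_tendsto_cutoff`) in the C⋆-algebra `M_N(A)`: if
`‖α - y‖ < ε` then `(α - ε)₊ ≾ y`. Here `(α - ε)₊ = (a - ε)₊ ⊗ 1_N` because `d ↦ d ⊗ 1_N` is a
star homomorphism (`map_cutoff`).

For the perturbation lemma, let `r = ‖α - y‖` and choose a continuous `f` vanishing on `[0, ε]`
with `f(t)² (t - r) = (t - ε)₊`. Conjugating the inequality `α - y ≤ r` by `f(α)` gives
`(α - ε)₊ ≤ f(α) y f(α)`, which leaves the fact that `0 ≤ c ≤ d` implies `c ≾ d`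
(`exists_tendsto_of_le`). There, with `H = (d / (d + s))²`, one has
`‖(1 - H) √c‖² = ‖(1 - H) c (1 - H)‖ ≤ ‖(1 - H) d (1 - H)‖ ≤ 2 s`, so `√c H √c → c` as `s → 0`,
while `√c H √c = x⋆ d x` for `x = √d (d + s)⁻¹ √c`.
-/

open Filter Topology Matrix

namespace Stmt14

variable {A : Type*} [NonUnitalCStarAlgebra A] [PartialOrder A] [StarOrderedRing A]

/-- `a ⊗ 1ₙ`: the block-diagonal matrix `diag (a, …, a)` (`n` copies). -/
def tensorOne {B : Type*} [Zero B] (d : B) (n : ℕ) : Matrix (Fin n) (Fin n) B :=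
  Matrix.diagonal fun _ => d

/-- Cuntz subequivalence `a ≾ b` for `a ∈ M_p(A)`, `b ∈ M_q(A)`: there is a sequence
`(x k)` of `q × p` matrices with `(x k)ᴴ * b * (x k) → a`. -/
def CuntzLeMat {p q : ℕ} (a : Matrix (Fin p) (Fin p) A) (b : Matrix (Fin q) (Fin q) A) :
    Prop :=
  ∃ x : ℕ → Matrix (Fin q) (Fin p) A,
    Tendsto (fun k => (x k)ᴴ * b * (x k)) atTop (nhds a)

/-- `a ≺_s b`: `a ⊗ 1_{k+1} ≾ b ⊗ 1_k` for some positive integer `k`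
(encoded as `k + 1` with `k : ℕ`). -/
def PrecS (a b : A) : Prop :=
  ∃ k : ℕ, CuntzLeMat (tensorOne a (k + 2)) (tensorOne b (k + 1))

/-- `(a - ε)₊`, via the continuous functional calculus with `t ↦ max (t - ε) 0`. -/
noncomputable def cutoff (a : A) (ε : ℝ) : A := cfcₙ (fun t : ℝ => max (t - ε) 0) a

section CStar

variable {M : Type*} [NonUnitalCStarAlgebra M]

lemma cfcₙ_conj {f : ℝ → ℝ} (hf : Continuous f) (h0 : f 0 = 0) {d : M} (hd : IsSelfAdjoint d) :
    cfcₙ (fun t => f t * t * f t) d = cfcₙ f d * d * cfcₙ f d := by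
  rw [cfcₙ_mul (fun t => f t * t) f d (by fun_prop) (by simp) (by fun_prop) h0,
    cfcₙ_mul f (fun t => t) d (by fun_prop) h0 (by fun_prop) rfl, cfcₙ_id' ℝ d hd]

lemma cfcₙ_compress {h : ℝ → ℝ} (hh : Continuous h) (h0 : h 0 = 0) {d : M}
    (hd : IsSelfAdjoint d) :
    cfcₙ (fun t => t - h t * t - t * h t + h t * t * h t) d
      = d - cfcₙ h d * d - d * cfcₙ h d + cfcₙ h d * d * cfcₙ h d := by
  rw [cfcₙ_add (fun t => t - h t * t - t * h t) (fun t => h t * t * h t) d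
      (by fun_prop) (by simp) (by fun_prop) (by simp),
    cfcₙ_sub (fun t => t - h t * t) (fun t => t * h t) d
      (by fun_prop) (by simp) (by fun_prop) (by simp),
    cfcₙ_sub (fun t => t) (fun t => h t * t) d (by fun_prop) (by simp) (by fun_prop) (by simp),
    cfcₙ_mul h (fun t => t) d (by fun_prop) h0 (by fun_prop) rfl,
    cfcₙ_mul (fun t => t) h d (by fun_prop) rfl (by fun_prop) h0, cfcₙ_conj hh h0 hd,
    cfcₙ_id' ℝ d hd]

lemma map_cutoff {B : Type*} [NonUnitalCStarAlgebra B] (φ : B →⋆ₙₐ[ℂ] M) {a : B}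
    (ha : IsSelfAdjoint a) {ε : ℝ} (hε : 0 ≤ ε) : φ (cutoff a ε) = cutoff (φ a) ε :=
  NonUnitalStarAlgHom.map_cfcₙ φ (fun t : ℝ => max (t - ε) 0) a (by fun_prop) (by simpa using hε)
    (NonUnitalStarAlgHom.instContinuousLinearMapClassComplex.map_continuous φ) ha (ha.map φ)

variable [PartialOrder M] [StarOrderedRing M]

/-- For self-adjoint `H` the map `x ↦ (1 - H) x (1 - H)`, written without a unit, is monotone. -/
lemma compress_mono {c d H : M} (hcd : c ≤ d) (hH : IsSelfAdjoint H) :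
    c - H * c - c * H + H * c * H ≤ d - H * d - d * H + H * d * H := by
  have hx : 0 ≤ d - c := sub_nonneg.2 hcd
  set g := CFC.sqrt (d - c) with hg
  have hgg : g * g = d - c := CFC.sqrt_mul_sqrt_self _
  have hgs : star g = g := (IsSelfAdjoint.of_nonneg (CFC.sqrt_nonneg _)).star_eq
  have h1 : star (g - g * H) * (g - g * H) =
      (d - H * d - d * H + H * d * H) - (c - H * c - c * H + H * c * H) := by
    have h2 : star (g - g * H) * (g - g * H)
        = g * g - H * (g * g) - (g * g) * H + H * (g * g) * H := by
      simp only [star_sub, star_mul, hgs, hH.star_eq]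
      noncomm_ring
    rw [h2, hgg]
    noncomm_ring
  rw [← sub_nonneg, ← h1]
  exact star_mul_self_nonneg _

/-- `√t / (t + s)`; conjugating `t` by it gives `(t / (t + s))²` for `t ≥ 0`, which tends to `1` on
`t > 0` as `s → 0`. The absolute value makes the function continuous on all of `ℝ`. -/
noncomputable def halfInv (s t : ℝ) : ℝ := √t / (|t| + s)

lemma continuous_halfInv {s : ℝ} (hs : 0 < s) : Continuous (halfInv s) := by
  unfold halfInv
  exact Continuous.div (by fun_prop) (by fun_prop) fun t => by positivity

lemma halfInv_bound {s t : ℝ} (hs : 0 < s) (ht : 0 ≤ t) :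
    ‖t - halfInv s t * t * halfInv s t * t - t * (halfInv s t * t * halfInv s t)
      + halfInv s t * t * halfInv s t * t * (halfInv s t * t * halfInv s t)‖ ≤ 2 * s := by
  have hts : 0 < t + s := by positivity
  have h : halfInv s t * t * halfInv s t = (t / (t + s)) ^ 2 := by
    unfold halfInv
    rw [abs_of_nonneg ht]
    field_simp
    rw [Real.sq_sqrt ht]
    ring
  rw [h]
  set u := t / (t + s) with hu
  have hu0 : 0 ≤ u := by positivity
  have hu1 : u ≤ 1 := by rw [hu, div_le_one hts]; linarith
  have hus : t * (1 - u) = u * s := by rw [hu]; field_simp; ring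
  have e : t - u ^ 2 * t - t * u ^ 2 + u ^ 2 * t * u ^ 2
      = u * s * ((1 + u) * (1 - u ^ 2)) := by
    rw [← hus]; ring
  rw [e, Real.norm_eq_abs, abs_of_nonneg]
  · have h1 : (1 + u) * (1 - u ^ 2) ≤ 2 := by nlinarith
    have h2 : 0 ≤ (1 + u) * (1 - u ^ 2) := mul_nonneg (by linarith) (by nlinarith)
    have h3 : u * s ≤ s := by nlinarith
    calc u * s * ((1 + u) * (1 - u ^ 2)) ≤ s * 2 :=
          mul_le_mul h3 h1 h2 hs.le
      _ = 2 * s := by ring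
  · have : 0 ≤ 1 - u ^ 2 := by nlinarith
    positivity

/-- Smaller positive elements are Cuntz-below larger ones: `x = halfInv s d * √c` satisfies
`x⋆ d x ≈ c` as `s → 0`. -/
lemma exists_tendsto_of_le {c d : M} (hc : 0 ≤ c) (hcd : c ≤ d) :
    ∃ z : ℕ → M, Tendsto (fun n => star (z n) * d * z n) atTop (𝓝 c) := by
  have hd : 0 ≤ d := hc.trans hcd
  set e := CFC.sqrt c with he
  have hee : e * e = c := CFC.sqrt_mul_sqrt_self _
  have hes : star e = e := (IsSelfAdjoint.of_nonneg (CFC.sqrt_nonneg _)).star_eq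
  let s : ℕ → ℝ := fun n => 1 / ((n : ℝ) + 1)
  have hs : ∀ n, 0 < s n := fun n => by positivity
  let P : ℕ → M := fun n => cfcₙ (halfInv (s n)) d
  have hPs : ∀ n, star (P n) = P n := fun n => IsSelfAdjoint.cfcₙ.star_eq
  let H : ℕ → M := fun n => P n * d * P n
  have hHs : ∀ n, IsSelfAdjoint (H n) := fun n => by
    simp only [IsSelfAdjoint, H, star_mul, hPs, (IsSelfAdjoint.of_nonneg hd).star_eq, mul_assoc]
  have hT : ∀ n, ‖d - H n * d - d * H n + H n * d * H n‖ ≤ 2 * s n := by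
    intro n
    have hcont := continuous_halfInv (hs n)
    have h0 : halfInv (s n) 0 = 0 := by simp [halfInv]
    have hH : H n = cfcₙ (fun t => halfInv (s n) t * t * halfInv (s n) t) d :=
      (cfcₙ_conj hcont h0 (.of_nonneg hd)).symm
    rw [hH, ← cfcₙ_compress (by fun_prop) (by simp) (.of_nonneg hd)]
    exact norm_cfcₙ_le fun t ht =>
      halfInv_bound (hs n) (quasispectrum_nonneg_of_nonneg d hd t ht)
  -- The unit-free form of `‖(1 - H) √c‖² = ‖(1 - H) c (1 - H)‖ ≤ ‖(1 - H) d (1 - H)‖`.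
  have hnorm : ∀ n, ‖e - H n * e‖ ≤ √(2 * s n) := by
    intro n
    apply Real.le_sqrt_of_sq_le
    have h1 : (e - H n * e) * star (e - H n * e) = c - H n * c - c * H n + H n * c * H n := by
      rw [← hee]
      simp only [star_sub, star_mul, hes, (hHs n).star_eq]
      noncomm_ring
    rw [sq, ← CStarRing.norm_self_mul_star, h1]
    refine (CStarAlgebra.norm_le_norm_of_nonneg_of_le ?_ (compress_mono hcd (hHs n))).trans (hT n)
    rw [← h1]
    exact mul_star_self_nonneg _
  have hs0 : Tendsto s atTop (𝓝 0) := tendsto_one_div_add_atTop_nhds_zero_nat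
  have hlim : Tendsto (fun n => e - H n * e) atTop (𝓝 0) := by
    refine squeeze_zero_norm hnorm ?_
    have := (Real.continuous_sqrt.tendsto _).comp (hs0.const_mul 2)
    rwa [mul_zero, Real.sqrt_zero] at this
  refine ⟨fun n => P n * e, ?_⟩
  have heq : ∀ n, star (P n * e) * d * (P n * e) = c - e * (e - H n * e) := by
    intro n
    rw [← hee]
    simp only [star_mul, hes, hPs, H]
    noncomm_ring
  simp only [heq]
  simpa using tendsto_const_nhds.sub (hlim.const_mul e)

/-- Rørdam's perturbation lemma: `‖a - y‖ < ε` implies `(a - ε)₊ ≾ y`. Self-adjointness of `y` is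
enough. -/
lemma exists_tendsto_cutoff {a y : M} (ha : 0 ≤ a) (hy : IsSelfAdjoint y) {ε : ℝ}
    (h : ‖a - y‖ < ε) :
    ∃ z : ℕ → M, Tendsto (fun n => star (z n) * y * z n) atTop (𝓝 (cutoff a ε)) := by
  set r := ‖a - y‖ with hr
  have hε : 0 < ε := (norm_nonneg _).trans_lt h
  -- `f² · (t - r) = (t - ε)₊`; the outer `max` only matters where the numerator vanishes.
  let f : ℝ → ℝ := fun t => √(max (t - ε) 0 / max (t - r) (ε - r))
  have hden : ∀ t, 0 < max (t - r) (ε - r) := fun t => lt_max_of_lt_right (by linarith)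
  have hfc : Continuous f :=
    Real.continuous_sqrt.comp
      (Continuous.div (by fun_prop) (by fun_prop) fun t => (hden t).ne')
  have hf0 : f 0 = 0 := by simp [f, hε.le]
  have hff : ∀ t, f t * t * f t - r * (f t * f t) = max (t - ε) 0 := by
    intro t
    have h1 : f t * f t = max (t - ε) 0 / max (t - r) (ε - r) :=
      Real.mul_self_sqrt (div_nonneg (le_max_right _ _) (hden t).le)
    have h2 : f t * t * f t - r * (f t * f t) = (f t * f t) * (t - r) := by ring
    rw [h2, h1]
    rcases le_total t ε with ht | ht
    · simp [ht]
    · rw [max_eq_left (by linarith : ε - r ≤ t - r)]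
      exact div_mul_cancel₀ _ (by linarith)
  set F := cfcₙ f a with hF
  have hFs : star F = F := IsSelfAdjoint.cfcₙ.star_eq
  have hcut : cutoff a ε = F * a * F - r • (F * F) := by
    have : cutoff a ε = cfcₙ (fun t => f t * t * f t - r * (f t * f t)) a := by
      simp only [hff]; rfl
    clear_value f
    rw [this, cfcₙ_sub (fun t => f t * t * f t) (fun t => r * (f t * f t)) a
        (by fun_prop) (by simp) (by fun_prop) (by simp [hf0]),
      cfcₙ_const_mul r (fun t => f t * f t) a (by fun_prop) (by simp [hf0]),
      cfcₙ_mul f f a (by fun_prop) hf0 (by fun_prop) hf0, cfcₙ_conj hfc hf0 (.of_nonneg ha)]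
  have hle : cutoff a ε ≤ F * y * F := by
    have := CStarAlgebra.star_left_conjugate_le_norm_smul (a := F) (b := a - y)
      ((IsSelfAdjoint.of_nonneg ha).sub hy)
    rw [hFs, mul_sub, sub_mul, ← hr] at this
    rw [hcut]
    exact sub_le_comm.1 this
  have hpos : 0 ≤ cutoff a ε := cfcₙ_nonneg fun t _ => le_max_right _ _
  obtain ⟨z, hz⟩ := exists_tendsto_of_le hpos hle
  refine ⟨fun n => F * z n, ?_⟩
  simpa only [star_mul, hFs, mul_assoc] using hz

end CStar

/-- `d ↦ d ⊗ 1ₙ` as a star homomorphism. The target is Mathlib's `CStarMatrix`, the type copy of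
`Matrix` that carries the C⋆-norm. -/
def tensorOneHom {B : Type*} [NonUnitalCStarAlgebra B] (n : ℕ) :
    B →⋆ₙₐ[ℂ] CStarMatrix (Fin n) (Fin n) B where
  toFun d := CStarMatrix.ofMatrix (tensorOne d n)
  map_smul' c d := by
    ext i j
    by_cases h : i = j <;>
      simp [tensorOne, CStarMatrix.ofMatrix_apply, h]
  map_zero' := Matrix.diagonal_zero
  map_add' c d := (Matrix.diagonal_add (fun _ => c) fun _ => d).symm
  map_mul' c d := (Matrix.diagonal_mul_diagonal (fun _ => c) fun _ => d).symm
  map_star' d := (Matrix.diagonal_conjTranspose fun _ => d).symm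

lemma continuous_tensorOne {B : Type*} [NonUnitalCStarAlgebra B] (n : ℕ) :
    Continuous fun d : B => tensorOne d n :=
  (continuous_pi fun _ => continuous_id).matrix_diagonal

lemma tendsto_cutoff {b : A} (hb : 0 ≤ b) :
    Tendsto (fun n : ℕ => cutoff b (1 / ((n : ℝ) + 1))) atTop (𝓝 b) := by
  rw [tendsto_iff_norm_sub_tendsto_zero]
  refine squeeze_zero (fun _ => norm_nonneg _) (fun n => ?_)
    tendsto_one_div_add_atTop_nhds_zero_nat
  have hδ : (0 : ℝ) < 1 / ((n : ℝ) + 1) := by positivity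
  set δ := 1 / ((n : ℝ) + 1)
  have : cutoff b δ - b = cfcₙ (fun t : ℝ => max (t - δ) 0 - t) b := by
    rw [cfcₙ_sub (fun t : ℝ => max (t - δ) 0) (fun t => t) b (by fun_prop)
      (by simpa using hδ.le), cfcₙ_id' ℝ b]
    rfl
  rw [this]
  refine norm_cfcₙ_le fun t ht => ?_
  have ht := quasispectrum_nonneg_of_nonneg b hb t ht
  rw [Real.norm_eq_abs, abs_le]
  rcases max_cases (t - δ) 0 with h | h <;> constructor <;> linarith

/-- Lemma 2.5: if `a, b` are positive elements of a C*-algebra `A` with `a ≺_s b`, then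
for each `ε > 0` there is `δ > 0` with `(a - ε)₊ ≺_s (b - δ)₊`. -/
theorem precS_cutoff (a b : A) (ha : 0 ≤ a) (hb : 0 ≤ b) (hab : PrecS a b)
    (ε : ℝ) (hε : 0 < ε) :
    ∃ δ : ℝ, 0 < δ ∧ PrecS (cutoff a ε) (cutoff b δ) := by
  obtain ⟨k, x, hx⟩ := hab
  -- `CStarMatrix` carries the entrywise topology, so its norm balls are open sets of matrices.
  let U : Set (Matrix (Fin (k + 2)) (Fin (k + 2)) A) :=
    {w | ‖tensorOneHom (k + 2) a - CStarMatrix.ofMatrix w‖ < ε}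
  have hU : IsOpen U := isOpen_lt
    (continuous_norm.comp (continuous_const.sub CStarMatrix.ofMatrixL.continuous)) continuous_const
  have haU : tensorOne a (k + 2) ∈ U := by
    change ‖tensorOneHom (k + 2) a - tensorOneHom (k + 2) a‖ < ε
    simpa using hε
  -- First fix the conjugating matrix `x m`, then the cut-off level of `b`.
  obtain ⟨m, hm⟩ := (hx.eventually (hU.mem_nhds haU)).exists
  have hcont : Continuous fun d : A => (x m)ᴴ * tensorOne d (k + 1) * x m :=
    (continuous_const.matrix_mul (continuous_tensorOne _)).matrix_mul continuous_const
  obtain ⟨n, hn⟩ := (((hcont.tendsto b).comp (tendsto_cutoff hb)).eventually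
    (hU.mem_nhds hm)).exists
  refine ⟨1 / ((n : ℝ) + 1), by positivity, ?_⟩
  set δ := 1 / ((n : ℝ) + 1)
  let w : Matrix (Fin (k + 2)) (Fin (k + 2)) A := (x m)ᴴ * tensorOne (cutoff b δ) (k + 1) * x m
  let y : CStarMatrix (Fin (k + 2)) (Fin (k + 2)) A := CStarMatrix.ofMatrix w
  have hcs : star (cutoff b δ) = cutoff b δ := IsSelfAdjoint.cfcₙ.star_eq
  have hys : IsSelfAdjoint y := by
    have hw : wᴴ = w := by
      simp only [w, conjTranspose_mul, conjTranspose_conjTranspose, tensorOne,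
        diagonal_conjTranspose, Matrix.mul_assoc, Pi.star_def, hcs]
    exact hw
  have hdist : ‖tensorOneHom (k + 2) a - y‖ < ε := hn
  have hpos : 0 ≤ tensorOneHom (k + 2) a := map_nonneg _ ha
  obtain ⟨z, hz⟩ := exists_tendsto_cutoff hpos hys hdist
  rw [← map_cutoff _ (.of_nonneg ha) hε.le] at hz
  let Z : ℕ → Matrix (Fin (k + 2)) (Fin (k + 2)) A := fun i => CStarMatrix.ofMatrix.symm (z i)
  have hZ : Tendsto (fun i => (Z i)ᴴ * w * Z i) atTop (𝓝 (tensorOne (cutoff a ε) (k + 2))) :=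
    (CStarMatrix.ofMatrixL.symm.continuous.tendsto _).comp hz
  refine ⟨k, fun i => x m * Z i, ?_⟩
  simpa only [w, conjTranspose_mul, Matrix.mul_assoc] using hZ

end Stmt14
end

section
/- Let A be a separable C*-algebra with property (S). Then for every a ∈ F(A) there exists b ∈ F(A) such that ab = 0, a ≺_s b, and a + b ∈ F(A). -/
/-!
Let `e ≥ 0` satisfy `e * a = a`. The element `p = (2 e - 1)₊` still satisfies `p * a = a`, and it lies
in `F(A)` because `min (2 e) 1` is a unit for it (`exists_unit_mem_Fset`). Property (S) is applied to
`p` rather than to `a`: there is `b ≥ 0` with `p * b = 0` and `p ≺_s b`.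

In general `b ∉ F(A)`, so `b` is replaced by the cut-down `b' = (b - ε)₊`, which has a positive local
unit `f` obtained from `b` by functional calculus (`exists_cutdown`). Then `p` and `f` are orthogonal
to `b'` and `a` respectively, hence `a * b' = a * p * b' = 0` and `p + f` is a local unit for `a + b'`.

It remains to see that `a ≺_s b'` for small `ε` (`exists_cuntzLeMat_of_near`). Fix one `x` such that
`x* (b ⊗ 1) x` is within `1/2` of `p ⊗ 1`. For small `ε` the same holds for `z = x* (b' ⊗ 1) x`.
Since `p` is a unit for `c = a^{1/2}`, compressing by `c ⊗ 1` gives `a ⊗ 1 ≤ 2 (c ⊗ 1) z (c ⊗ 1)`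
(`exists_tendsto_of_norm_sub_le`), and domination `c² ≤ d` implies Cuntz subequivalence
(`exists_tendsto_of_sq_le`). The last two steps take place in the C*-algebra of matrices over `A`,
`CStarMatrix`, whose topology is that of entrywise convergence.
-/


open Filter Topology Matrix

namespace Stmt16

variable {A : Type*} [NonUnitalCStarAlgebra A] [PartialOrder A] [StarOrderedRing A]

/-- `a ⊗ 1ₙ`: the block-diagonal matrix `diag (a, …, a)` (`n` copies). -/
def tensorOne {B : Type*} [Zero B] (d : B) (n : ℕ) : Matrix (Fin n) (Fin n) B :=
  Matrix.diagonal fun _ => d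

/-- Cuntz subequivalence `a ≾ b` for `a ∈ M_p(A)`, `b ∈ M_q(A)`: there is a sequence
`(x k)` of `q × p` matrices with `(x k)ᴴ * b * (x k) → a`. -/
def CuntzLeMat {p q : ℕ} (a : Matrix (Fin p) (Fin p) A) (b : Matrix (Fin q) (Fin q) A) :
    Prop :=
  ∃ x : ℕ → Matrix (Fin q) (Fin p) A,
    Tendsto (fun k => (x k)ᴴ * b * (x k)) atTop (nhds a)

/-- `a ≺_s b`: `a ⊗ 1_{k+1} ≾ b ⊗ 1_k` for some positive integer `k`
(encoded as `k + 1` with `k : ℕ`). -/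
def PrecS (a b : A) : Prop :=
  ∃ k : ℕ, CuntzLeMat (tensorOne a (k + 2)) (tensorOne b (k + 1))

/-- `F(A)`: the set of positive `a ∈ A` with `e * a = a` for some positive `e ∈ A`. -/
def Fset (A : Type*) [NonUnitalCStarAlgebra A] [PartialOrder A] [StarOrderedRing A] :
    Set A :=
  {a : A | 0 ≤ a ∧ ∃ e : A, 0 ≤ e ∧ e * a = a}

/-- Property (S): for every `a ∈ F(A)` there is a positive `b ∈ A` with `a * b = 0` and
`a ≺_s b`. -/
def PropS (A : Type*) [NonUnitalCStarAlgebra A] [PartialOrder A] [StarOrderedRing A] :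
    Prop :=
  ∀ a ∈ Fset A, ∃ b : A, 0 ≤ b ∧ a * b = 0 ∧ PrecS a b

/-- If `0 ≤ h ≤ d` then `‖(1 - g) h (1 - g)‖ ≤ ‖(1 - g) d (1 - g)‖`, with `h = c * c` and the
products expanded so that no unit is needed. -/
lemma norm_sub_mul_sq_le {M : Type*} [NonUnitalCStarAlgebra M] [PartialOrder M] [StarOrderedRing M]
    {c d g : M} (hc : IsSelfAdjoint c) (hg : IsSelfAdjoint g) (h : c * c ≤ d) :
    ‖c - c * g‖ * ‖c - c * g‖ ≤ ‖d - d * g - g * d + g * d * g‖ := by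
  rw [← CStarRing.norm_star_mul_self]
  refine CStarAlgebra.norm_le_norm_of_nonneg_of_le (star_mul_self_nonneg _) ?_
  obtain ⟨s, hs, hs2⟩ : ∃ s : M, IsSelfAdjoint s ∧ s * s = d - c * c :=
    ⟨CFC.sqrt (d - c * c), (CFC.sqrt_nonneg _).isSelfAdjoint,
      CFC.sqrt_mul_sqrt_self _ (sub_nonneg.2 h)⟩
  have hd : d = s * s + c * c := by rw [hs2]; abel
  have : d - d * g - g * d + g * d * g - star (c - c * g) * (c - c * g)
      = star (s - s * g) * (s - s * g) := by
    simp only [star_sub, star_mul, hc.star_eq, hg.star_eq, hs.star_eq]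
    rw [hd]
    noncomm_ring
  rw [← sub_nonneg, this]
  exact star_mul_self_nonneg _

/-- If `c * c ≤ d` then `c * c` is a limit of elements `x * d * star x` with `x = c * w`. The witness
is `w = d^{1/2} (d + ε)⁻¹`, so that `w * d * w = (d (d + ε)⁻¹) ^ 2`. -/
lemma exists_tendsto_of_sq_le {M : Type*} [NonUnitalCStarAlgebra M] [PartialOrder M]
    [StarOrderedRing M] {c d : M} (hc : IsSelfAdjoint c) (h : c * c ≤ d) :
    ∃ w : ℕ → M, (∀ n, IsSelfAdjoint (w n)) ∧
      Tendsto (fun n => c * (w n * d * w n) * c) atTop (𝓝 (c * c)) := by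
  have hd0 : 0 ≤ d := le_trans (by simpa [hc.star_eq] using star_mul_self_nonneg c) h
  have hd : IsSelfAdjoint d := hd0.isSelfAdjoint
  have hsp : ∀ t ∈ quasispectrum ℝ d, 0 ≤ t := fun t ht => quasispectrum_nonneg_of_nonneg d hd0 t ht
  let ε : ℕ → ℝ := fun n => 1 / ((n : ℝ) + 1)
  have hε : ∀ n, 0 < ε n := fun n => by positivity
  have hne : ∀ n (t : ℝ), |t| + ε n ≠ 0 := fun n t => by have := hε n; positivity
  let G : ℕ → ℝ → ℝ := fun n t => t / (|t| + ε n)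
  let W : ℕ → ℝ → ℝ := fun n t => √t / (|t| + ε n)
  have hG : ∀ n, Continuous (G n) := fun n => by
    exact Continuous.div (by fun_prop) (by fun_prop) (hne n)
  have hW : ∀ n, Continuous (W n) := fun n => by
    exact Continuous.div (by fun_prop) (by fun_prop) (hne n)
  have hG0 : ∀ n, G n 0 = 0 := fun n => by simp [G]
  have hW0 : ∀ n, W n 0 = 0 := fun n => by simp [W]
  have hid : cfcₙ (fun t : ℝ => t) d = d := cfcₙ_id' ℝ d
  let g : ℕ → M := fun n => cfcₙ (G n) d
  have hgs : ∀ n, IsSelfAdjoint (g n) := fun n => cfcₙ_predicate (G n) d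
  have key : ∀ n, cfcₙ (W n) d * d * cfcₙ (W n) d = g n * g n := by
    intro n
    have h1 : cfcₙ (W n) d * d = cfcₙ (fun t => W n t * t) d := by
      rw [cfcₙ_mul (W n) (fun t => t) d (hW n).continuousOn (hW0 n) (by fun_prop) rfl, hid]
    rw [h1, ← cfcₙ_mul (fun t => W n t * t) _ d
      ((hW n).mul continuous_id).continuousOn (by simp) (hW n).continuousOn (hW0 n), ← cfcₙ_mul _ _ d (hG n).continuousOn (hG0 n)
      (hG n).continuousOn (hG0 n)]
    refine cfcₙ_congr fun t ht => ?_
    have := Real.mul_self_sqrt (hsp t ht)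
    simp only [W, G]
    rw [div_mul_eq_mul_div, div_mul_div_comm, div_mul_div_comm,
      show √t * t * √t = √t * √t * t by ring, this]
  have key2 : ∀ n, ‖d - d * g n - g n * d + g n * d * g n‖ ≤ ε n := by
    intro n
    have e1 : d * g n = cfcₙ (fun t => t * G n t) d := by
      rw [cfcₙ_mul (fun t => t) (G n) d (by fun_prop) rfl (hG n).continuousOn (hG0 n), hid]
    have e2 : g n * d = cfcₙ (fun t => G n t * t) d := by
      rw [cfcₙ_mul (G n) (fun t => t) d (hG n).continuousOn (hG0 n) (by fun_prop) rfl, hid]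
    have hG' := hG n
    have e3 : g n * d * g n = cfcₙ (fun t => G n t * t * G n t) d := by
      rw [cfcₙ_mul (fun t => G n t * t) (G n) d (by fun_prop) (by simp) (hG n).continuousOn (hG0 n),
        ← e2]
    have e : d - d * g n - g n * d + g n * d * g n
        = cfcₙ (fun t => t - t * G n t - G n t * t + G n t * t * G n t) d := by
      rw [cfcₙ_add (fun t => t - t * G n t - G n t * t) (fun t => G n t * t * G n t) d
          (by fun_prop) (by simp) (by fun_prop) (by simp),
        cfcₙ_sub (fun t => t - t * G n t) (fun t => G n t * t) d
          (by fun_prop) (by simp) (by fun_prop) (by simp),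
        cfcₙ_sub (fun t => t) (fun t => t * G n t) d
          (by fun_prop) (by simp) (by fun_prop) (by simp), hid, ← e3, ← e2, ← e1]
    rw [e]
    refine norm_cfcₙ_le fun t ht => ?_
    have ht0 := hsp t ht
    have hp := hε n
    have e4 : t - t * G n t - G n t * t + G n t * t * G n t = t * ε n ^ 2 / (t + ε n) ^ 2 := by
      simp only [G, abs_of_nonneg ht0]
      field_simp
      ring
    rw [e4, Real.norm_of_nonneg (by positivity), div_le_iff₀ (by positivity)]
    nlinarith [mul_nonneg hp.le (sq_nonneg t), mul_nonneg (mul_nonneg hp.le hp.le) ht0,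
      pow_pos hp 3]
  have hε0 : Tendsto ε atTop (𝓝 0) := tendsto_one_div_add_atTop_nhds_zero_nat
  have hcg : Tendsto (fun n => c * g n) atTop (𝓝 c) := by
    have h1 : Tendsto (fun n => ‖c - c * g n‖ * ‖c - c * g n‖) atTop (𝓝 0) :=
      squeeze_zero (fun n => by positivity)
        (fun n => (norm_sub_mul_sq_le hc (hgs n) h).trans (key2 n)) hε0
    have h2 : Tendsto (fun n => ‖c - c * g n‖) atTop (𝓝 0) := by
      have := h1.sqrt
      simpa [Real.sqrt_mul_self (norm_nonneg _)] using this
    have h3 := tendsto_zero_iff_norm_tendsto_zero.2 h2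
    have h4 := (tendsto_const_nhds (x := c)).sub h3
    simpa using h4
  refine ⟨fun n => cfcₙ (W n) d, fun n => cfcₙ_predicate (W n) d, ?_⟩
  have h5 := hcg.mul hcg.star
  rw [hc.star_eq] at h5
  refine h5.congr fun n => ?_
  rw [key, star_mul, hc.star_eq, (hgs n).star_eq]
  simp only [mul_assoc]

/-- If `P` acts as a unit on `c` and `z` is close to `P`, then `c * c` is Cuntz subequivalent to `z`:
compressing `P - z ≤ 1/2` by `c` gives `c * c ≤ 2 c z c ≤ (c + c) z (c + c)`. -/
lemma exists_tendsto_of_norm_sub_le {M : Type*} [NonUnitalCStarAlgebra M] [PartialOrder M]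
    [StarOrderedRing M] {c P z : M} (hc : IsSelfAdjoint c) (hP : IsSelfAdjoint P)
    (hz : IsSelfAdjoint z) (hPc : P * c = c) (hn : ‖P - z‖ ≤ 1 / 2) :
    ∃ y : ℕ → M, Tendsto (fun n => star (y n) * z * y n) atTop (𝓝 (c * c)) := by
  have hcc : 0 ≤ c * c := by simpa [hc.star_eq] using star_mul_self_nonneg c
  have h1 := CStarAlgebra.star_left_conjugate_le_norm_smul (a := c) (hP.sub hz)
  rw [hc.star_eq, mul_sub, sub_mul, mul_assoc c P c, hPc] at h1
  have h2 : ‖P - z‖ • (c * c) ≤ (1 / 2 : ℝ) • (c * c) := smul_le_smul_of_nonneg_right hn hcc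
  have h3 : c * c ≤ c * z * c + c * z * c := by
    have h4 := h1.trans h2
    have h5 := add_le_add h4 h4
    rw [← add_smul] at h5
    norm_num at h5
    rw [← sub_nonneg] at h5 ⊢
    convert h5 using 1
    abel
  have h4 : c * c ≤ (c + c) * z * (c + c) := by
    have h5 := add_le_add h3 (hcc.trans h3)
    rw [add_zero] at h5
    convert h5 using 1
    noncomm_ring
  obtain ⟨w, hw, hlim⟩ := exists_tendsto_of_sq_le hc h4
  refine ⟨fun n => (c + c) * w n * c, hlim.congr fun n => ?_⟩
  simp only [star_mul, star_add, hc.star_eq, (hw n).star_eq, mul_assoc]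

lemma tensorOne_mul {B : Type*} [NonUnitalCStarAlgebra B] (x y : B) (n : ℕ) : tensorOne x n * tensorOne y n = tensorOne (x * y) n := by
  simp [tensorOne]

lemma tensorOne_conjTranspose {B : Type*} [NonUnitalCStarAlgebra B] {x : B} (hx : IsSelfAdjoint x) (n : ℕ) :
    (tensorOne x n)ᴴ = tensorOne x n := by
  simp [tensorOne, Matrix.diagonal_conjTranspose, Pi.star_def, hx.star_eq]

/-- If `p` acts as a unit on `a ≥ 0` and `p ⊗ 1 ≾ b ⊗ 1`, then `a ⊗ 1` is subequivalent to `b' ⊗ 1`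
for every self-adjoint `b'` close enough to `b`. -/
lemma exists_cuntzLeMat_of_near {a p b : A} (ha : 0 ≤ a) (hp : IsSelfAdjoint p) (hpa : p * a = a)
    {m n : ℕ} (h : CuntzLeMat (tensorOne p m) (tensorOne b n)) :
    ∃ δ > 0, ∀ b' : A, IsSelfAdjoint b' → ‖b' - b‖ < δ →
      CuntzLeMat (tensorOne a m) (tensorOne b' n) := by
  obtain ⟨c, hc, hcc, hpc⟩ : ∃ c : A, IsSelfAdjoint c ∧ c * c = a ∧ p * c = c := by
    refine ⟨CFC.sqrt a, (CFC.sqrt_nonneg _).isSelfAdjoint, CFC.sqrt_mul_sqrt_self _ ha, ?_⟩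
    have hs : IsSelfAdjoint (CFC.sqrt a) := (CFC.sqrt_nonneg _).isSelfAdjoint
    have hs2 := CFC.sqrt_mul_sqrt_self a ha
    rw [← sub_eq_zero, ← CStarRing.mul_star_self_eq_zero_iff]
    rw [star_sub, star_mul, hs.star_eq, hp.star_eq]
    have hap : a * p = a := by
      simpa [hp.star_eq, ha.isSelfAdjoint.star_eq] using congrArg star hpa
    calc _ = p * (CFC.sqrt a * CFC.sqrt a) * p - p * (CFC.sqrt a * CFC.sqrt a)
          - (CFC.sqrt a * CFC.sqrt a) * p + CFC.sqrt a * CFC.sqrt a := by noncomm_ring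
      _ = 0 := by rw [hs2, hpa, hap]; abel
  obtain ⟨x, hx⟩ := h
  let P : CStarMatrix (Fin m) (Fin m) A := CStarMatrix.ofMatrix (tensorOne p m)
  let C : CStarMatrix (Fin m) (Fin m) A := CStarMatrix.ofMatrix (tensorOne c m)
  have hP : IsSelfAdjoint P := tensorOne_conjTranspose hp m
  have hC : IsSelfAdjoint C := tensorOne_conjTranspose hc m
  have hPC : P * C = C := (tensorOne_mul p c m).trans (by rw [hpc]; rfl)
  have hCC : C * C = CStarMatrix.ofMatrix (tensorOne a m) :=
    (tensorOne_mul c c m).trans (by rw [hcc]; rfl)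
  let S : Set (Matrix (Fin m) (Fin m) A) := {y | ‖P - CStarMatrix.ofMatrix y‖ < 1 / 2}
  have hcont : Continuous (fun y : Matrix (Fin m) (Fin m) A => CStarMatrix.ofMatrix y) :=
    CStarMatrix.ofMatrixL.continuous
  have hS : IsOpen S := isOpen_lt (by fun_prop) continuous_const
  have hmem : S ∈ 𝓝 (tensorOne p m) := hS.mem_nhds (by simp [S, P])
  obtain ⟨k, hk⟩ := (hx.eventually hmem).exists
  have hF : Continuous (fun t : A => (x k)ᴴ * tensorOne t n * x k) := by
    unfold tensorOne
    fun_prop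
  obtain ⟨δ, hδ, hball⟩ := Metric.isOpen_iff.1 (hS.preimage hF) b hk
  refine ⟨δ, hδ, fun b' hb' hbb => ?_⟩
  have hb'S : (x k)ᴴ * tensorOne b' n * x k ∈ S := hball (by simpa [dist_eq_norm] using hbb)
  have hz : IsSelfAdjoint (CStarMatrix.ofMatrix ((x k)ᴴ * tensorOne b' n * x k)) := by
    change ((x k)ᴴ * tensorOne b' n * x k)ᴴ = _
    simp [Matrix.conjTranspose_mul, tensorOne_conjTranspose hb', Matrix.mul_assoc]
    rfl
  obtain ⟨y, hy⟩ := exists_tendsto_of_norm_sub_le hC hP hz hPC hb'S.le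
  rw [hCC] at hy
  refine ⟨fun i => x k * CStarMatrix.ofMatrix.symm (y i), ?_⟩
  have hy' := (CStarMatrix.ofMatrixL.symm.continuous.tendsto _).comp hy
  refine hy'.congr fun i => ?_
  have e : (x k * CStarMatrix.ofMatrix.symm (y i))ᴴ * tensorOne b' n
      * (x k * CStarMatrix.ofMatrix.symm (y i)) = (CStarMatrix.ofMatrix.symm (y i))ᴴ
      * ((x k)ᴴ * tensorOne b' n * x k) * CStarMatrix.ofMatrix.symm (y i) := by
    simp only [Matrix.conjTranspose_mul, Matrix.mul_assoc]
  exact e.symm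

/-- Every `a ∈ F(A)` has a local unit that itself lies in `F(A)`: `(2 e - 1)₊` for any `e` with
`e * a = a`. -/
lemma exists_unit_mem_Fset {a : A} (ha : a ∈ Fset A) : ∃ p ∈ Fset A, p * a = a := by
  obtain ⟨ha0, e, he0, hea⟩ := ha
  have he : IsSelfAdjoint e := he0.isSelfAdjoint
  have hsp : ∀ t ∈ quasispectrum ℝ e, 0 ≤ t := fun t ht => quasispectrum_nonneg_of_nonneg e he0 t ht
  have hid : cfcₙ (fun t : ℝ => t) e = e := cfcₙ_id' ℝ e
  -- `(2 t - 1)₊ = t + u t * t - u t` with `u` continuous and vanishing at `0`.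
  let u : ℝ → ℝ := fun t => min t (1 / 2) / (1 - min t (1 / 2))
  have hune : ∀ t : ℝ, 1 - min t (1 / 2) ≠ 0 := fun t => by
    have := min_le_right t (1 / 2); linarith
  have hu : Continuous u := Continuous.div (by fun_prop) (by fun_prop) hune
  have hu0 : u 0 = 0 := by simp [u]
  have hpu : ∀ t : ℝ, max (2 * t - 1) 0 = t + u t * t - u t := by
    intro t
    rcases le_total t (1 / 2) with h | h
    · have h1 : 1 - t ≠ 0 := by linarith
      simp only [u, min_eq_left h, max_eq_right (show 2 * t - 1 ≤ 0 by linarith)]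
      field_simp
      ring
    · simp only [u, min_eq_right h, max_eq_left (show 0 ≤ 2 * t - 1 by linarith)]
      ring
  let p := cfcₙ (fun t : ℝ => max (2 * t - 1) 0) e
  have hpe : p = e + cfcₙ u e * e - cfcₙ u e := by
    simp only [p, hpu]
    rw [cfcₙ_sub (fun t => t + u t * t) u e (by fun_prop) (by simp) (by fun_prop) hu0,
      cfcₙ_add (fun t => t) (fun t => u t * t) e (by fun_prop) (by simp) (by fun_prop) (by simp),
      cfcₙ_mul u (fun t => t) e (by fun_prop) hu0 (by fun_prop) (by simp), hid]
  refine ⟨p, ⟨cfcₙ_nonneg fun t _ => le_max_right _ _, cfcₙ (fun t : ℝ => min (2 * t) 1) e,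
    cfcₙ_nonneg fun t ht => le_min (by linarith [hsp t ht]) zero_le_one, ?_⟩, ?_⟩
  · rw [← cfcₙ_mul _ _ e (by fun_prop) (by simp) (by fun_prop) (by simp)]
    refine cfcₙ_congr fun t _ => ?_
    rcases le_total (2 * t) 1 with h | h
    · simp [max_eq_right (show 2 * t - 1 ≤ 0 by linarith)]
    · simp [min_eq_right h]
  · rw [hpe, sub_mul, add_mul, mul_assoc, hea]
    abel

/-- The cut-down `b' = (b - ε)₊` of a positive `b` is within `ε` of `b` and has a positive local
unit `f`. As `b'` lies in `bA` and `f` in `Ab`, every `p` with `p * b = 0 = b * p` satisfies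
`p * b' = 0 = f * p`. -/
lemma exists_cutdown {b : A} (hb0 : 0 ≤ b) {ε : ℝ} (hε : 0 < ε) :
    ∃ b' f x y : A, 0 ≤ b' ∧ 0 ≤ f ∧ f * b' = b' ∧ ‖b' - b‖ ≤ ε ∧ b' = b * x ∧ f = y * b := by
  have hb : IsSelfAdjoint b := hb0.isSelfAdjoint
  have hsp : ∀ t ∈ quasispectrum ℝ b, 0 ≤ t := fun t ht => quasispectrum_nonneg_of_nonneg b hb0 t ht
  have hid : cfcₙ (fun t : ℝ => t) b = b := cfcₙ_id' ℝ b
  have hm : ∀ t : ℝ, 0 < max t ε := fun t => lt_max_of_lt_right hε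
  let X : ℝ → ℝ := fun t => max (t - ε) 0 / max t ε
  let Y : ℝ → ℝ := fun t => t / max t ε ^ 2
  have hX : Continuous X := Continuous.div (by fun_prop) (by fun_prop) fun t => (hm t).ne'
  have hY : Continuous Y :=
    Continuous.div (by fun_prop) (by fun_prop) fun t => (pow_pos (hm t) 2).ne'
  have hX0 : X 0 = 0 := by simp [X, hε.le]
  have hY0 : Y 0 = 0 := by simp [Y]
  have hXn : ∀ t, 0 ≤ X t := fun t => div_nonneg (le_max_right _ _) (hm t).le
  have e1 : b * cfcₙ X b = cfcₙ (fun t => t * X t) b := by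
    rw [cfcₙ_mul (fun t => t) X b (by fun_prop) rfl hX.continuousOn hX0, hid]
  have e2 : cfcₙ Y b * b = cfcₙ (fun t => Y t * t) b := by
    rw [cfcₙ_mul Y (fun t => t) b hY.continuousOn hY0 (by fun_prop) rfl, hid]
  refine ⟨b * cfcₙ X b, cfcₙ Y b * b, cfcₙ X b, cfcₙ Y b, ?_, ?_, ?_, ?_, rfl, rfl⟩
  · rw [e1]
    exact cfcₙ_nonneg fun t ht => mul_nonneg (hsp t ht) (hXn t)
  · rw [e2]
    exact cfcₙ_nonneg fun t ht =>
      mul_nonneg (div_nonneg (hsp t ht) (pow_pos (hm t) 2).le) (hsp t ht)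
  · rw [e1, e2, ← cfcₙ_mul _ _ b (by fun_prop) (by simp) (by fun_prop) (by simp)]
    refine cfcₙ_congr fun t _ => ?_
    rcases le_total t ε with h | h
    · simp [X, max_eq_right (show t - ε ≤ 0 by linarith)]
    · have : t ≠ 0 := by linarith
      simp only [Y, max_eq_left h]
      field_simp
  · have e3 : b * cfcₙ X b - b = cfcₙ (fun t => t * X t - t) b := by
      rw [cfcₙ_sub (fun t => t * X t) (fun t => t) b (by fun_prop) (by simp) (by fun_prop) rfl,
        ← e1, hid]
    rw [e3]
    refine norm_cfcₙ_le fun t ht => ?_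
    have ht0 := hsp t ht
    rw [Real.norm_eq_abs, abs_le]
    rcases le_total t ε with h | h
    · simp only [X, max_eq_right (show t - ε ≤ 0 by linarith), zero_div, mul_zero]
      constructor <;> linarith
    · have : t ≠ 0 := by linarith
      simp only [X, max_eq_left h, max_eq_left (sub_nonneg.2 h)]
      rw [mul_div_cancel₀ _ this]
      constructor <;> linarith

/-- Lemma 4.3 (first part): if `A` is a separable C*-algebra with property (S), then for
every `a ∈ F(A)` there is `b ∈ F(A)` with `a * b = 0`, `a ≺_s b`, and `a + b ∈ F(A)`. -/
theorem exists_orthogonal_dominating [TopologicalSpace.SeparableSpace A]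
    (hS : PropS A) (a : A) (ha : a ∈ Fset A) :
    ∃ b ∈ Fset A, a * b = 0 ∧ PrecS a b ∧ a + b ∈ Fset A := by
  obtain ⟨p, hpF, hpa⟩ := exists_unit_mem_Fset ha
  have hp : IsSelfAdjoint p := hpF.1.isSelfAdjoint
  have ha' : IsSelfAdjoint a := ha.1.isSelfAdjoint
  have hap : a * p = a := by simpa [hp.star_eq, ha'.star_eq] using congrArg star hpa
  obtain ⟨b, hb0, hpb, k, hk⟩ := hS p hpF
  have hbp : b * p = 0 := by
    simpa [hp.star_eq, hb0.isSelfAdjoint.star_eq] using congrArg star hpb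
  obtain ⟨δ, hδ, hnear⟩ := exists_cuntzLeMat_of_near ha.1 hp hpa hk
  obtain ⟨b', f, x, y, hb', hf, hfb, hbb, hbx, hfy⟩ := exists_cutdown hb0 (half_pos hδ)
  have hpb' : p * b' = 0 := by rw [hbx, ← mul_assoc, hpb, zero_mul]
  have hfa : f * a = 0 := by
    rw [← hpa, hfy, mul_assoc, ← mul_assoc b, hbp, zero_mul, mul_zero]
  refine ⟨b', ⟨hb', f, hf, hfb⟩, ?_, ⟨k, hnear b' hb'.isSelfAdjoint (by linarith)⟩,
    add_nonneg ha.1 hb', p + f, add_nonneg hpF.1 hf, ?_⟩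
  · rw [← hap, mul_assoc, hpb', mul_zero]
  · rw [add_mul, mul_add, mul_add, hpa, hpb', hfa, hfb, add_zero, zero_add]

end Stmt16
end

section
/- Let A be a separable C*-algebra with property (S). Then for every a ∈ F(A) there is a sequence b_0, b_1, b_2, … of elements of F(A) such that the elements a, b_0, b_1, b_2, … are pairwise orthogonal (the product of any two distinct ones is zero), a + b_0 + b_1 + ⋯ + b_n belongs to F(A) for every n, and a ≺_s b_0 ≺_s b_1 ≺_s b_2 ≺_s ⋯. -/
/-!
The sequence is built by iterating one step: every `a ∈ F(A)` admits `b ∈ F(A)` with `a b = 0`,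
`a + b ∈ F(A)` and `a ≺_s b` (`exists_step`). Applying it to `a`, then to `a + b₀`, then to
`a + b₀ + b₁`, and so on, gives the `b n`. Orthogonality to a sum of positive elements implies
orthogonality to each summand, and `b n ≺_s b (n + 1)` because `b n` is a compression of
`a + b₀ + ⋯ + b n`.

For the step, functional calculus gives a unit `c ∈ F(A)` for `a` (`exists_unit_mem_Fset`), and
property (S), applied to `c`, gives a positive `b ⊥ c` with `c ≺_s b`. This `b` need not lie in
`F(A)`, but its truncations `(b - δ)₊` do, with units in `b A`, hence orthogonal to `a`
(`exists_approx_mem_Fset`). That `a ≺_s (b - δ)₊` for small `δ` is a version of Rørdam's lemma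
(`eventually_precS`): if `c ⊗ 1` is within `1/2` of `y = x* ((b - δ)₊ ⊗ 1) x` and `S = a^{1/2} ⊗ 1`,
then `S² ≤ 2 S y S` since `c` is a unit for `a^{1/2}`, and an inequality of positive elements implies
Cuntz subequivalence (`exists_tendsto_of_sq_le`).
-/

open Filter Topology Matrix

namespace Stmt17

variable {A : Type*} [NonUnitalCStarAlgebra A] [PartialOrder A] [StarOrderedRing A]

/-- `a ⊗ 1ₙ`: the block-diagonal matrix `diag (a, …, a)` (`n` copies). -/
def tensorOne {B : Type*} [Zero B] (d : B) (n : ℕ) : Matrix (Fin n) (Fin n) B :=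
  Matrix.diagonal fun _ => d

/-- Cuntz subequivalence `a ≾ b` for `a ∈ M_p(A)`, `b ∈ M_q(A)`: there is a sequence
`(x k)` of `q × p` matrices with `(x k)ᴴ * b * (x k) → a`. -/
def CuntzLeMat {p q : ℕ} (a : Matrix (Fin p) (Fin p) A) (b : Matrix (Fin q) (Fin q) A) :
    Prop :=
  ∃ x : ℕ → Matrix (Fin q) (Fin p) A,
    Tendsto (fun k => (x k)ᴴ * b * (x k)) atTop (nhds a)

/-- `a ≺_s b`: `a ⊗ 1_{k+1} ≾ b ⊗ 1_k` for some positive integer `k`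
(encoded as `k + 1` with `k : ℕ`). -/
def PrecS (a b : A) : Prop :=
  ∃ k : ℕ, CuntzLeMat (tensorOne a (k + 2)) (tensorOne b (k + 1))

/-- `F(A)`: the set of positive `a ∈ A` with `e * a = a` for some positive `e ∈ A`. -/
def Fset (A : Type*) [NonUnitalCStarAlgebra A] [PartialOrder A] [StarOrderedRing A] :
    Set A :=
  {a : A | 0 ≤ a ∧ ∃ e : A, 0 ≤ e ∧ e * a = a}

/-- Property (S): for every `a ∈ F(A)` there is a positive `b ∈ A` with `a * b = 0` and
`a ≺_s b`. -/
def PropS (A : Type*) [NonUnitalCStarAlgebra A] [PartialOrder A] [StarOrderedRing A] :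
    Prop :=
  ∀ a ∈ Fset A, ∃ b : A, 0 ≤ b ∧ a * b = 0 ∧ PrecS a b


/-- If `s² ≤ q`, then `s² ≾ q`. With `u = q (q + δ)⁻¹`, the element `w = q^{1/2} (q + δ)⁻¹ s`
satisfies `w* q w = (u s)* (u s)`, and `u s → s` as `δ → 0` because
`(1 - u) s² (1 - u) ≤ (1 - u) q (1 - u) ≤ δ`. -/
lemma exists_tendsto_of_sq_le {B : Type*} [NonUnitalCStarAlgebra B] [PartialOrder B]
    [StarOrderedRing B] {s q : B} (hs : IsSelfAdjoint s) (h : s * s ≤ q) :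
    ∃ w : ℕ → B, Tendsto (fun n => star (w n) * q * w n) atTop (nhds (s * s)) := by
  have hq : 0 ≤ q := le_trans (by simpa [hs.star_eq] using star_mul_self_nonneg s) h
  have hqs : IsSelfAdjoint q := .of_nonneg hq
  have hpos : ∀ t ∈ quasispectrum ℝ q, 0 ≤ t := quasispectrum_nonneg_of_nonneg q hq
  let δ : ℕ → ℝ := fun n => 1 / ((n : ℝ) + 1)
  have hδ : ∀ n, 0 < δ n := fun n => by positivity
  let f : ℕ → ℝ → ℝ := fun n t => √t / (|t| + δ n)
  let g : ℕ → ℝ → ℝ := fun n t => t / (|t| + δ n)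
  have hne : ∀ n t, |t| + δ n ≠ 0 := fun n t => by have := hδ n; positivity
  have hf : ∀ n, Continuous (f n) := fun n =>
    Real.continuous_sqrt.div (by fun_prop) (hne n)
  have hg : ∀ n, Continuous (g n) := fun n =>
    continuous_id.div (by fun_prop) (hne n)
  have hf0 : ∀ n, f n 0 = 0 := fun n => by simp [f]
  have hg0 : ∀ n, g n 0 = 0 := fun n => by simp [g]
  let H : ℕ → B := fun n => cfcₙ (f n) q
  let u : ℕ → B := fun n => cfcₙ (g n) q
  have hH : ∀ n, IsSelfAdjoint (H n) := fun n => cfcₙ_predicate _ _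
  have hu : ∀ n, IsSelfAdjoint (u n) := fun n => cfcₙ_predicate _ _
  have hHu : ∀ n, H n * q * H n = u n * u n := fun n => by
    have h1 : H n * q = cfcₙ (fun t => f n t * t) q := by
      rw [cfcₙ_mul (f n) (fun t => t) q (hf n).continuousOn (hf0 n), cfcₙ_id' ℝ q]
    rw [h1]
    change _ * cfcₙ (f n) q = cfcₙ (g n) q * cfcₙ (g n) q
    rw [← cfcₙ_mul (fun t => f n t * t) (f n) q ((hf n).mul continuous_id).continuousOn (by simp) (hf n).continuousOn
      (hf0 n), ← cfcₙ_mul (g n) (g n) q (hg n).continuousOn (hg0 n) (hg n).continuousOn (hg0 n)]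
    refine cfcₙ_congr fun t ht => ?_
    simp only [f, g]
    field_simp
    rw [Real.sq_sqrt (hpos t ht), ← sq]
  have hbound : ∀ n, ‖s - u n * s‖ ^ 2 ≤ δ n := fun n => by
    have h1 : q - u n * q - q * u n + u n * q * u n
        = cfcₙ (fun t => t - g n t * t - t * g n t + g n t * t * g n t) q := by
      have c1 := (hg n).continuousOn (s := quasispectrum ℝ q)
      have c2 : Continuous (fun t => g n t * t) := (hg n).mul continuous_id
      have c3 : Continuous (fun t => t * g n t) := continuous_id.mul (hg n)
      rw [cfcₙ_add (fun t => t - g n t * t - t * g n t) (fun t => g n t * t * g n t) q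
          ((continuous_id.sub c2).sub c3).continuousOn (by simp)
          (c2.mul (hg n)).continuousOn (by simp),
        cfcₙ_sub (fun t => t - g n t * t) _ q (continuous_id.sub c2).continuousOn (by simp)
          c3.continuousOn (by simp),
        cfcₙ_sub (fun t => t) _ q continuous_id.continuousOn (by simp) c2.continuousOn (by simp),
        cfcₙ_mul (fun t => g n t * t) (g n) q c2.continuousOn (by simp) c1 (hg0 n),
        cfcₙ_mul (fun t => t) (g n) q continuous_id.continuousOn (by simp) c1 (hg0 n),
        cfcₙ_mul (g n) (fun t => t) q c1 (hg0 n), cfcₙ_id' ℝ q]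
    have h2 : ‖q - u n * q - q * u n + u n * q * u n‖ ≤ δ n := by
      rw [h1]
      refine norm_cfcₙ_le fun t ht => ?_
      have h0 := hpos t ht
      have hd := hδ n
      have : t - g n t * t - t * g n t + g n t * t * g n t = t * δ n ^ 2 / (t + δ n) ^ 2 := by
        simp only [g, abs_of_nonneg h0]
        field_simp
        ring
      rw [this, Real.norm_of_nonneg (by positivity), div_le_iff₀ (by positivity)]
      nlinarith [mul_nonneg hd.le (sq_nonneg t), mul_nonneg (mul_nonneg hd.le hd.le) h0,
        pow_pos hd 3]
    have h3 : (s - u n * s) * star (s - u n * s)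
        = s * s - u n * (s * s) - s * s * u n + u n * (s * s) * u n := by
      simp only [star_sub, star_mul, hs.star_eq, (hu n).star_eq]
      noncomm_ring
    have h4 : (s - u n * s) * star (s - u n * s) ≤ q - u n * q - q * u n + u n * q * u n := by
      rw [h3, ← sub_nonneg]
      obtain ⟨r, hr, hr2⟩ : ∃ r : B, IsSelfAdjoint r ∧ q - s * s = r * r :=
        ⟨CFC.sqrt (q - s * s), .of_nonneg (CFC.sqrt_nonneg _),
          (CFC.sqrt_mul_sqrt_self _ (sub_nonneg.2 h)).symm⟩
      have h5 : q - u n * q - q * u n + u n * q * u n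
          - (s * s - u n * (s * s) - s * s * u n + u n * (s * s) * u n)
          = star (r - r * u n) * (r - r * u n) := by
        have : star (r - r * u n) * (r - r * u n)
            = r * r - u n * (r * r) - r * r * u n + u n * (r * r) * u n := by
          simp only [star_sub, star_mul, hr.star_eq, (hu n).star_eq]
          noncomm_ring
        rw [this, ← hr2]
        noncomm_ring
      rw [h5]
      exact star_mul_self_nonneg _
    calc ‖s - u n * s‖ ^ 2 = ‖(s - u n * s) * star (s - u n * s)‖ := by
          rw [CStarRing.norm_self_mul_star, sq]
      _ ≤ _ := CStarAlgebra.norm_le_norm_of_nonneg_of_le (mul_star_self_nonneg _) h4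
      _ ≤ δ n := h2
  have hδ0 : Tendsto δ atTop (nhds 0) := tendsto_one_div_add_atTop_nhds_zero_nat
  have hlim : Tendsto (fun n => u n * s) atTop (nhds s) := by
    rw [tendsto_iff_norm_sub_tendsto_zero]
    have hsq : Tendsto (fun n => √(δ n)) atTop (nhds 0) := by
      simpa [Function.comp_def] using (Real.continuous_sqrt.tendsto 0).comp hδ0
    refine squeeze_zero (fun _ => norm_nonneg _) (fun n => ?_) hsq
    rw [norm_sub_rev]
    exact Real.le_sqrt_of_sq_le (hbound n)
  refine ⟨fun n => H n * s, ?_⟩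
  have h6 : ∀ n, star (H n * s) * q * (H n * s) = star (u n * s) * (u n * s) := fun n => by
    calc star (H n * s) * q * (H n * s) = s * (H n * q * H n) * s := by
          simp only [star_mul, hs.star_eq, (hH n).star_eq, mul_assoc]
      _ = _ := by
          rw [hHu]
          simp only [star_mul, hs.star_eq, (hu n).star_eq, mul_assoc]
  simp only [h6]
  simpa only [hs.star_eq] using hlim.star.mul hlim

/-- A perturbation form of Cuntz subequivalence: if `y` is within `1/2` of an element `c` acting
as a unit under `s`, then `s² / 2 ≤ s y s`, hence `s² ≾ y`. -/
lemma exists_tendsto_of_norm_sub_le {B : Type*} [NonUnitalCStarAlgebra B] [PartialOrder B]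
    [StarOrderedRing B] {s c y : B} (hs : IsSelfAdjoint s) (hcy : IsSelfAdjoint (c - y))
    (hn : ‖c - y‖ ≤ 1 / 2) (hsc : s * c * s = s * s) :
    ∃ z : ℕ → B, Tendsto (fun n => star (z n) * y * z n) atTop (nhds (s * s)) := by
  have hss : 0 ≤ s * s := by simpa [hs.star_eq] using star_mul_self_nonneg s
  have h1 : s * (c - y) * s ≤ (1 / 2 : ℝ) • (s * s) := by
    have := CStarAlgebra.star_left_conjugate_le_norm_smul (a := s) hcy
    rw [hs.star_eq] at this
    exact this.trans (smul_le_smul_of_nonneg_right hn hss)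
  have h2 : s * s ≤ (2 : ℝ) • (s * y * s) := by
    rw [mul_sub, sub_mul, hsc, sub_le_comm] at h1
    have h3 : s * s - (1 / 2 : ℝ) • (s * s) = (1 / 2 : ℝ) • (s * s) := by
      module
    rw [h3] at h1
    have := smul_le_smul_of_nonneg_left h1 (zero_le_two (α := ℝ))
    simpa [smul_smul] using this
  obtain ⟨w, hw⟩ := exists_tendsto_of_sq_le hs h2
  refine ⟨fun n => √2 • (s * w n), ?_⟩
  convert hw using 2 with n
  simp only [star_smul, star_mul, hs.star_eq, star_trivial, smul_mul_assoc, mul_smul_comm, smul_smul,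
    Real.mul_self_sqrt zero_le_two, mul_assoc]

/-- The perturbation statement for matrices, phrased with the entrywise topology. -/
lemma eventually_exists_tendsto {n : ℕ} {S C : Matrix (Fin n) (Fin n) A}
    (hS : Sᴴ = S) (hC : Cᴴ = C) (hSC : S * C * S = S * S) :
    ∀ᶠ y in nhds C, yᴴ = y → ∃ z : ℕ → Matrix (Fin n) (Fin n) A,
      Tendsto (fun k => (z k)ᴴ * y * z k) atTop (nhds (S * S)) := by
  have h : ∀ᶠ y in nhds (CStarMatrix.ofMatrix C), ‖CStarMatrix.ofMatrix C - y‖ ≤ 1 / 2 := by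
    filter_upwards [Metric.ball_mem_nhds (CStarMatrix.ofMatrix C) (half_pos one_pos)] with y hy
    rw [mem_ball_iff_norm, norm_sub_rev] at hy
    exact hy.le
  have h' : ∀ᶠ y : Matrix (Fin n) (Fin n) A in nhds C,
    ‖CStarMatrix.ofMatrix C - CStarMatrix.ofMatrix y‖ ≤ 1 / 2 := h
  filter_upwards [h'] with y hy hys
  have hsub : IsSelfAdjoint (CStarMatrix.ofMatrix C - CStarMatrix.ofMatrix y) :=
    IsSelfAdjoint.sub (R := CStarMatrix (Fin n) (Fin n) A) hC hys
  exact exists_tendsto_of_norm_sub_le (B := CStarMatrix (Fin n) (Fin n) A)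
    (s := CStarMatrix.ofMatrix S) (c := CStarMatrix.ofMatrix C) (y := CStarMatrix.ofMatrix y)
    hS hsub hy hSC

lemma conjTranspose_tensorOne {B : Type*} [NonUnitalCStarAlgebra B] {d : B} (hd : IsSelfAdjoint d) (n : ℕ) :
    (tensorOne d n)ᴴ = tensorOne d n := by
  simp [tensorOne, Matrix.diagonal_conjTranspose, hd.star_eq, Pi.star_def]

lemma tensorOne_mul {B : Type*} [NonUnitalCStarAlgebra B] (c d : B) (n : ℕ) :
    tensorOne c n * tensorOne d n = tensorOne (c * d) n := by
  simp [tensorOne]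

/-- If `c` is a unit for `a` and `c ≺_s b`, then `a ≺_s b'` for every self-adjoint `b'` close
enough to `b`. -/
lemma eventually_precS {a c b : A} (ha : 0 ≤ a) (hc : 0 ≤ c) (hca : c * a = a)
    (h : PrecS c b) : ∀ᶠ b' in nhds b, IsSelfAdjoint b' → PrecS a b' := by
  obtain ⟨k, x, hx⟩ := h
  have has : IsSelfAdjoint a := .of_nonneg ha
  have hcs : IsSelfAdjoint c := .of_nonneg hc
  obtain ⟨s, hs, hsa⟩ : ∃ s : A, IsSelfAdjoint s ∧ s * s = a :=
    ⟨CFC.sqrt a, .of_nonneg (CFC.sqrt_nonneg _), CFC.sqrt_mul_sqrt_self a ha⟩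
  have hac : a * c = a := by
    simpa [has.star_eq, hcs.star_eq] using congrArg star hca
  have hcs' : c * s = s := by
    rw [← sub_eq_zero, ← CStarRing.mul_star_self_eq_zero_iff]
    calc (c * s - s) * star (c * s - s) = c * (s * s) * c - c * (s * s) - s * s * c + s * s := by
          simp only [star_sub, star_mul, hs.star_eq, hcs.star_eq]
          noncomm_ring
      _ = 0 := by rw [hsa, hca, hac]; simp
  have hS := eventually_exists_tendsto (conjTranspose_tensorOne hs (k + 2))
    (conjTranspose_tensorOne hcs (k + 2))
    (by simp only [tensorOne_mul, mul_assoc, hcs'])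
  obtain ⟨N, hN⟩ := (hx.eventually hS.eventually_nhds).exists
  have hcont : Continuous fun b' : A => (x N)ᴴ * tensorOne b' (k + 1) * x N := by
    unfold tensorOne
    fun_prop
  filter_upwards [(hcont.tendsto b).eventually hN] with b' hb' hsb
  obtain ⟨z, hz⟩ := hb' (by
    simp only [Matrix.conjTranspose_mul, conjTranspose_tensorOne hsb,
      Matrix.conjTranspose_conjTranspose, Matrix.mul_assoc])
  refine ⟨k, fun n => x N * z n, ?_⟩
  rw [tensorOne_mul, hsa] at hz
  simpa only [Matrix.conjTranspose_mul, Matrix.mul_assoc] using hz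

/-- Compressing the left-hand side: `e a e ≺_s b` whenever `a ≺_s b`. -/
lemma PrecS.conj {B : Type*} [NonUnitalCStarAlgebra B] {a b e : B} (he : IsSelfAdjoint e) (h : PrecS a b) : PrecS (e * a * e) b := by
  obtain ⟨k, x, hx⟩ := h
  refine ⟨k, fun n => x n * tensorOne e (k + 2), ?_⟩
  have hcont : Continuous fun y : Matrix (Fin (k + 2)) (Fin (k + 2)) B =>
      tensorOne e (k + 2) * y * tensorOne e (k + 2) := by fun_prop
  have := (hcont.tendsto _).comp hx
  simp only [tensorOne_mul] at this
  refine this.congr fun n => ?_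
  simp only [Function.comp, Matrix.conjTranspose_mul, conjTranspose_tensorOne he, Matrix.mul_assoc]

/-- A unit for `a ∈ F(A)` can itself be chosen in `F(A)`: if `e a = a`, then `f(e)` works, where
`f(t) = max(2t - 1, 0)`, with unit `min(2e, 1)`. -/
lemma exists_unit_mem_Fset {a : A} (ha : a ∈ Fset A) : ∃ c ∈ Fset A, c * a = a := by
  obtain ⟨-, e, he, hea⟩ := ha
  have hes : IsSelfAdjoint e := .of_nonneg he
  have hpos : ∀ t ∈ quasispectrum ℝ e, 0 ≤ t := quasispectrum_nonneg_of_nonneg e he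
  let f : ℝ → ℝ := fun t => max (2 * t - 1) 0
  let g : ℝ → ℝ := fun t => min (2 * t) 1
  -- `f t = t + r t * (t - 1)` for `t ≥ 0`, so that `f(e) a = a` follows from `e a = a`.
  let r : ℝ → ℝ := fun t => min 1 (t / max (1 / 2) (1 - t))
  have hf : Continuous f := by fun_prop
  have hg : Continuous g := by fun_prop
  have hr : Continuous r := by
    refine continuous_const.min (continuous_id.div (by fun_prop) fun t => ?_)
    exact (lt_of_lt_of_le (by norm_num) (le_max_left _ _)).ne'
  have hf0 : f 0 = 0 := by simp [f]
  have hg0 : g 0 = 0 := by simp [g]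
  have hr0 : r 0 = 0 := by simp [r]
  refine ⟨cfcₙ f e, ⟨cfcₙ_nonneg fun t _ => le_max_right _ _, cfcₙ g e,
    cfcₙ_nonneg fun t ht => le_min (by linarith [hpos t ht]) zero_le_one, ?_⟩, ?_⟩
  · rw [← cfcₙ_mul g f e hg.continuousOn hg0 hf.continuousOn hf0]
    refine cfcₙ_congr fun t _ => ?_
    simp only [f, g]
    rcases le_total (2 * t) 1 with h | h
    · rw [max_eq_right (by linarith)]; simp
    · rw [min_eq_right h, one_mul]
  · have key : cfcₙ f e = e + (cfcₙ r e * e - cfcₙ r e) := by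
      have c1 : Continuous fun t => r t * t := hr.mul continuous_id
      have : cfcₙ f e = cfcₙ (fun t => t + (r t * t - r t)) e := by
        refine cfcₙ_congr fun t ht => ?_
        have h0 := hpos t ht
        simp only [f, r]
        rcases le_total (1 / 2) t with h | h
        · rw [max_eq_left (by linarith), max_eq_left (by linarith), min_eq_left (by linarith)]
          ring
        · rw [max_eq_right (by linarith), max_eq_right (by linarith)]
          have h1 : 0 < 1 - t := by linarith
          rw [min_eq_right (by rw [div_le_one h1]; linarith)]
          field_simp
          ring
      rw [this, cfcₙ_add (fun t => t) (fun t => r t * t - r t) e continuous_id.continuousOn (by simp)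
          (c1.sub hr).continuousOn (by simp [hr0]),
        cfcₙ_sub _ r e c1.continuousOn (by simp) hr.continuousOn hr0,
        cfcₙ_mul r (fun t => t) e hr.continuousOn hr0, cfcₙ_id' ℝ e]
    rw [key, add_mul, sub_mul, mul_assoc, hea, sub_self, add_zero]

/-- Every positive `b` is a limit of elements `b'` of `F(A)`, where both `b'` and a unit `v` for
`b'` lie in `b A`. Here `b' = (b - δ)₊` and `v = b² / max(b, δ)²`. -/
lemma exists_approx_mem_Fset {b : A} (hb : 0 ≤ b) :
    ∃ (d m v n : ℕ → A), Tendsto d atTop (nhds b) ∧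
      ∀ k, 0 ≤ d k ∧ 0 ≤ v k ∧ v k * d k = d k ∧ d k = b * m k ∧ v k = b * n k := by
  have hbs : IsSelfAdjoint b := .of_nonneg hb
  have hpos : ∀ t ∈ quasispectrum ℝ b, 0 ≤ t := quasispectrum_nonneg_of_nonneg b hb
  let δ : ℕ → ℝ := fun n => 1 / ((n : ℝ) + 1)
  have hδ : ∀ n, 0 < δ n := fun n => by positivity
  have hmax : ∀ k t, 0 < max t (δ k) := fun k t => lt_of_lt_of_le (hδ k) (le_max_right _ _)
  let f : ℕ → ℝ → ℝ := fun k t => max (t - δ k) 0 / max t (δ k)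
  let g : ℕ → ℝ → ℝ := fun k t => t / max t (δ k) ^ 2
  have hf : ∀ k, Continuous (f k) := fun k =>
    Continuous.div (by fun_prop) (by fun_prop) fun t => (hmax k t).ne'
  have hg : ∀ k, Continuous (g k) := fun k =>
    continuous_id.div (by fun_prop) fun t => (pow_pos (hmax k t) 2).ne'
  have hf0 : ∀ k, f k 0 = 0 := fun k => by
    simp only [f]; rw [max_eq_right (by linarith [hδ k]), zero_div]
  have hg0 : ∀ k, g k 0 = 0 := fun k => by simp [g]
  have hF : ∀ k, cfcₙ (fun t => t * f k t) b = b * cfcₙ (f k) b := fun k => by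
    rw [cfcₙ_mul (fun t => t) (f k) b continuous_id.continuousOn rfl (hf k).continuousOn (hf0 k),
      cfcₙ_id' ℝ b]
  have hG : ∀ k, cfcₙ (fun t => t * g k t) b = b * cfcₙ (g k) b := fun k => by
    rw [cfcₙ_mul (fun t => t) (g k) b continuous_id.continuousOn rfl (hg k).continuousOn (hg0 k),
      cfcₙ_id' ℝ b]
  have cF : ∀ k, Continuous (fun t => t * f k t) := fun k => continuous_id.mul (hf k)
  have cG : ∀ k, Continuous (fun t => t * g k t) := fun k => continuous_id.mul (hg k)
  refine ⟨fun k => cfcₙ (fun t => t * f k t) b, fun k => cfcₙ (f k) b,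
    fun k => cfcₙ (fun t => t * g k t) b, fun k => cfcₙ (g k) b, ?_,
    fun k => ⟨?_, ?_, ?_, hF k, hG k⟩⟩
  · rw [tendsto_iff_norm_sub_tendsto_zero]
    refine squeeze_zero (fun _ => norm_nonneg _) (fun k => ?_)
      (tendsto_one_div_add_atTop_nhds_zero_nat (𝕜 := ℝ))
    have : cfcₙ (fun t => t * f k t) b - b = cfcₙ (fun t => t * f k t - t) b := by
      rw [cfcₙ_sub _ (fun t => t) b (cF k).continuousOn (by simp), cfcₙ_id' ℝ b]
    rw [this]
    refine norm_cfcₙ_le fun t ht => ?_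
    have h0 := hpos t ht
    have hd := hδ k
    change |t * (max (t - δ k) 0 / max t (δ k)) - t| ≤ δ k
    rcases le_total t (δ k) with h | h
    · rw [max_eq_right (by linarith), zero_div, mul_zero, zero_sub, abs_neg, abs_of_nonneg h0]
      exact h
    · rw [max_eq_left (by linarith), max_eq_left h, mul_div_cancel₀ _ (by linarith),
        abs_le]
      constructor <;> linarith
  · exact cfcₙ_nonneg fun t ht => mul_nonneg (hpos t ht)
      (div_nonneg (le_max_right _ _) (hmax k t).le)
  · exact cfcₙ_nonneg fun t ht => mul_nonneg (hpos t ht)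
      (div_nonneg (hpos t ht) (pow_pos (hmax k t) 2).le)
  · rw [← cfcₙ_mul _ _ b (cG k).continuousOn (by simp) (cF k).continuousOn (by simp)]
    refine cfcₙ_congr fun t ht => ?_
    have hd := hδ k
    simp only [f, g]
    rcases le_total t (δ k) with h | h
    · rw [max_eq_right (a := t - δ k) (by linarith)]; simp
    · rw [max_eq_left h]
      have : 0 < t := by linarith
      field_simp

/-- One step of the construction. The unit `v` for `b`, orthogonal to `a`, exhibits `b` as the
compression `v (a + b) v`. -/
lemma exists_step (hS : PropS A) {a : A} (ha : a ∈ Fset A) :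
    ∃ b ∈ Fset A, a * b = 0 ∧ a + b ∈ Fset A ∧ PrecS a b ∧
      ∃ v : A, IsSelfAdjoint v ∧ v * (a + b) * v = b := by
  obtain ⟨c, hcF, hca⟩ := exists_unit_mem_Fset ha
  obtain ⟨b, hb, hcb, hprec⟩ := hS c hcF
  obtain ⟨d, m, v, n, hd, hk⟩ := exists_approx_mem_Fset hb
  obtain ⟨k, hpk⟩ := (hd.eventually (eventually_precS ha.1 hcF.1 hca hprec)).exists
  obtain ⟨hd0, hv0, hvd, hdm, hvn⟩ := hk k
  have has : IsSelfAdjoint a := .of_nonneg ha.1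
  have hcs : IsSelfAdjoint c := .of_nonneg hcF.1
  have hvs : IsSelfAdjoint (v k) := .of_nonneg hv0
  have hds : IsSelfAdjoint (d k) := .of_nonneg hd0
  have hac : a * c = a := by
    simpa [has.star_eq, hcs.star_eq] using congrArg star hca
  have hab : a * b = 0 := by rw [← hac, mul_assoc, hcb, mul_zero]
  have had : a * d k = 0 := by rw [hdm, ← mul_assoc, hab, zero_mul]
  have hcd : c * d k = 0 := by rw [hdm, ← mul_assoc, hcb, zero_mul]
  have hav : a * v k = 0 := by rw [hvn, ← mul_assoc, hab, zero_mul]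
  have hva : v k * a = 0 := by
    simpa [has.star_eq, hvs.star_eq] using congrArg star hav
  have hdv : d k * v k = d k := by
    simpa [hds.star_eq, hvs.star_eq] using congrArg star hvd
  refine ⟨d k, ⟨hd0, v k, hv0, hvd⟩, had, ⟨add_nonneg ha.1 hd0, c + v k,
    add_nonneg hcF.1 hv0, ?_⟩, hpk hds, v k, hvs, ?_⟩
  · rw [add_mul, mul_add, mul_add, hca, hcd, hva, hvd, add_zero, zero_add]
  · rw [mul_add, hva, hvd, zero_add, hdv]

/-- Lemma 4.4: if `A` is a separable C*-algebra with property (S), then for every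
`a ∈ F(A)` there is a sequence `b_0, b_1, b_2, …` in `F(A)` such that `a, b_0, b_1, …`
are pairwise orthogonal, `a + b_0 + ⋯ + b_n ∈ F(A)` for all `n`, and
`a ≺_s b_0 ≺_s b_1 ≺_s ⋯`. -/
theorem exists_orthogonal_sequence [TopologicalSpace.SeparableSpace A]
    (hS : PropS A) (a : A) (ha : a ∈ Fset A) :
    ∃ b : ℕ → A, (∀ n, b n ∈ Fset A) ∧
      (∀ n, a * b n = 0 ∧ b n * a = 0) ∧
      (∀ i j, i ≠ j → b i * b j = 0) ∧
      (∀ n, a + ∑ i ∈ Finset.range (n + 1), b i ∈ Fset A) ∧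
      PrecS a (b 0) ∧ (∀ n, PrecS (b n) (b (n + 1))) := by
  choose! B hBF hBorth hBadd hBprec hBv using fun x : A => exists_step hS (a := x)
  -- `s n = a + b 0 + ⋯ + b (n - 1)`
  let s : ℕ → A := fun n => Nat.rec a (fun _ x => x + B x) n
  have hs1 : ∀ n, s (n + 1) = s n + B (s n) := fun _ => rfl
  have hsF : ∀ n, s n ∈ Fset A := fun n => by
    induction n with
    | zero => exact ha
    | succ n ih => rw [hs1]; exact hBadd _ ih
  have hsum : ∀ n, s n = a + ∑ i ∈ Finset.range n, B (s i) := fun n => by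
    induction n with
    | zero => simp [s]
    | succ n ih => rw [hs1, Finset.sum_range_succ, ← add_assoc, ← ih]
  have hsa : ∀ n, IsSelfAdjoint (s n) := fun n => .of_nonneg (hsF n).1
  have hba : ∀ n, IsSelfAdjoint (B (s n)) := fun n => .of_nonneg (hBF _ (hsF n)).1
  have hsymm : ∀ {x y : A}, IsSelfAdjoint x → IsSelfAdjoint y → x * y = 0 → y * x = 0 := by
    intro x y hx hy h
    simpa [hx.star_eq, hy.star_eq] using congrArg star h
  -- Orthogonality to a sum of positive elements passes to each summand: `z* x z ≤ z* y z = 0`.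
  have hdom : ∀ {x y z : A}, 0 ≤ x → x ≤ y → y * z = 0 → x * z = 0 := by
    intro x y z hx hxy hyz
    obtain ⟨r, hr, hr2⟩ : ∃ r : A, IsSelfAdjoint r ∧ r * r = x :=
      ⟨CFC.sqrt x, .of_nonneg (CFC.sqrt_nonneg _), CFC.sqrt_mul_sqrt_self x hx⟩
    have h1 : star z * x * z ≤ 0 := by
      have := star_left_conjugate_le_conjugate hxy z
      rwa [mul_assoc (star z) y z, hyz, mul_zero] at this
    have h2 : star z * x * z = star (r * z) * (r * z) := by
      rw [star_mul, hr.star_eq, ← hr2]; simp only [mul_assoc]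
    have h3 : r * z = 0 := by
      rw [← CStarRing.star_mul_self_eq_zero_iff]
      exact le_antisymm (h2 ▸ h1) (star_mul_self_nonneg _)
    rw [← hr2, mul_assoc, h3, mul_zero]
  have hmono : Monotone s := monotone_nat_of_le_succ fun n => by
    rw [hs1]; exact le_add_of_nonneg_right (hBF _ (hsF n)).1
  have hle : ∀ {i j}, i < j → B (s i) ≤ s j := fun {i j} hij =>
    le_trans (by rw [hs1]; exact le_add_of_nonneg_left (hsF i).1) (hmono (Nat.succ_le_of_lt hij))
  have hlt : ∀ {i j}, i < j → B (s i) * B (s j) = 0 := fun {i j} hij =>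
    hdom (hBF _ (hsF i)).1 (hle hij) (hBorth _ (hsF j))
  have ha0 : ∀ n, a * B (s n) = 0 := fun n =>
    hdom ha.1 (hmono (Nat.zero_le n)) (hBorth _ (hsF n))
  refine ⟨fun n => B (s n), fun n => hBF _ (hsF n),
    fun n => ⟨ha0 n, hsymm (.of_nonneg ha.1) (hba n) (ha0 n)⟩, fun i j hij => ?_, fun n => ?_,
    hBprec _ ha, fun n => ?_⟩
  · rcases lt_or_gt_of_ne hij with h | h
    · exact hlt h
    · exact hsymm (hba j) (hba i) (hlt h)
  · rw [← hsum (n + 1)]; exact hsF (n + 1)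
  · obtain ⟨v, hv, hv2⟩ := hBv _ (hsF n)
    have := (hBprec _ (hsF (n + 1))).conj hv
    rwa [hs1 n, hv2, ← hs1 n] at this

end Stmt17
end

section
/- Let A be a separable C*-algebra. Then the following conditions are equivalent: (i) A has property (S); (ii) the matrix algebra M_n(A) has property (S) for some natural number n; (iii) M_n(A) has property (S) for all natural numbers n. -/
/-!
Write `a ≾ b` for Cuntz subequivalence of positive matrices of any sizes over `A`, encoded (`CLe`)
as membership of `a` in the closure of `{xᴴ * b * x}`; this makes transitivity a continuity
argument. Everything rests on one comparison in a C⋆-algebra `B` (`mem_closure_of_le`): if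
`t t⋆ ≤ M b` then `t⋆ t ≾ b`. Indeed, cutting `t` by functions of `b` close to `1` away from `0`
approximates `t`. Two consequences are used in `B = Mₙ(A)`, namely `s⋆ s ≾ s s⋆`, and
`c c⋆ ≾ (c - r c)⋆ (c - r c)` whenever `‖r‖ ≤ 1/2`.

*From `A` to `Mₙ(A)`.* Let `a = s⋆ s` and `e a = a` in `Mₙ(A)`; then `e s⋆ = s⋆`. Functional
calculus yields a selfadjoint `g ∈ A` with a positive local unit such that `G = g ⊗ 1ₙ` satisfies
`‖e - G e‖ ≤ 1/2`. Property (S) for `g²` gives a positive `d` with `g² d = 0`, hence `g √d = 0`,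
and `g² ≺ₛ d`. Put `S = √d ⊗ 1ₙ`, `q = (1 - e) S` and `b = q q⋆`. Then

* `a b = 0`, because `a e = a`;
* `a ≾ g² ⊗ 1ₙ`, because `G s⋆ = s⋆ - (e - G e) s⋆`;
* `d ⊗ 1ₙ = S S⋆ ≾ q⋆ q ≾ q q⋆ = b`, because `G S = 0` gives `q = S - (e - e G) S`.

Tensoring with identities and reordering the indices gives
`a ⊗ 1_{k+1} ≾ (g² ⊗ 1_{k+1}) ⊗ 1ₙ ≾ (d ⊗ 1_k) ⊗ 1ₙ ≾ b ⊗ 1_k`.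

*From `Mₙ(A)` to `A`.* If `e a = a` in `A`, then `a ⊗ 1ₙ` lies in `F(Mₙ(A))`, so there is a positive
`D = s⋆ s` orthogonal to `a ⊗ 1ₙ` with `a ⊗ 1ₙ ≺ₛ D`. The sum `b` of the diagonal entries of `D` is
orthogonal to `a` and dominates `s_{li}⋆ s_{li}` for all `l, i`; therefore
`D ≾ s s⋆ ≾ b ⊗ 1ₙ`, and `a ⊗ 1_{n(k+1)} ≾ b ⊗ 1_{nk}` with `n(k+1) ≥ nk + 1`.
-/

open Filter Topology Matrix

namespace Stmt18

/-- `a ⊗ 1ₙ`: the block-diagonal matrix `diag (a, …, a)` (`n` copies). -/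
def tensorOne {B : Type*} [Zero B] (d : B) (n : ℕ) : Matrix (Fin n) (Fin n) B :=
  Matrix.diagonal fun _ => d

/-- Cuntz subequivalence `a ≾ b` for `a ∈ M_p(B)`, `b ∈ M_q(B)`: there is a sequence
`(x k)` of `q × p` matrices with `(x k)ᴴ * b * (x k) → a`. -/
def CuntzLeMat {B : Type*} [NonUnitalNonAssocSemiring B] [Star B] [TopologicalSpace B]
    {p q : ℕ} (a : Matrix (Fin p) (Fin p) B) (b : Matrix (Fin q) (Fin q) B) : Prop :=
  ∃ x : ℕ → Matrix (Fin q) (Fin p) B,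
    Tendsto (fun k => (x k)ᴴ * b * (x k)) atTop (nhds a)

/-- `a ≺_s b` in `B`: `a ⊗ 1_{k+1} ≾ b ⊗ 1_k` for some positive integer `k`
(encoded as `k + 1` with `k : ℕ`). -/
def PrecS {B : Type*} [NonUnitalNonAssocSemiring B] [Star B] [TopologicalSpace B]
    (a b : B) : Prop :=
  ∃ k : ℕ, CuntzLeMat (tensorOne a (k + 2)) (tensorOne b (k + 1))

variable (A : Type*) [NonUnitalCStarAlgebra A] [PartialOrder A] [StarOrderedRing A]

/-- `F(A)`: the set of positive `a ∈ A` with `e * a = a` for some positive `e ∈ A`. -/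
def Fset : Set A := {a : A | 0 ≤ a ∧ ∃ e : A, 0 ≤ e ∧ e * a = a}

/-- Property (S) for `A`. -/
def PropS : Prop := ∀ a ∈ Fset A, ∃ b : A, 0 ≤ b ∧ a * b = 0 ∧ PrecS a b

/-- Positivity in `Mₙ(A)`: `a = bᴴ * b` for some matrix `b`. -/
def MatPos {n : ℕ} (a : Matrix (Fin n) (Fin n) A) : Prop :=
  ∃ b : Matrix (Fin n) (Fin n) A, a = bᴴ * b

/-- `F(Mₙ(A))`: positive `a ∈ Mₙ(A)` with `e * a = a` for some positive `e ∈ Mₙ(A)`. -/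
def FsetMat (n : ℕ) : Set (Matrix (Fin n) (Fin n) A) :=
  {a | MatPos A a ∧ ∃ e : Matrix (Fin n) (Fin n) A, MatPos A e ∧ e * a = a}

/-- Property (S) for the matrix algebra `Mₙ(A)`. -/
def PropSMat (n : ℕ) : Prop :=
  ∀ a ∈ FsetMat A n, ∃ b : Matrix (Fin n) (Fin n) A, MatPos A b ∧ a * b = 0 ∧ PrecS a b

/-! ### Cutting down by functions of a positive element -/

/-- If `t t⋆ ≤ M b` and `x (1 - φ x)² ≤ δ` on `[0, ∞)`, then `(1 - φ(b)) t` has norm at most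
`√(M δ)`. The inequality `t t⋆ ≤ M b` is conjugated by `1 - φ(b)`, an element of the unitization. -/
theorem norm_sub_cfcn_mul_sq_le {B : Type*} [NonUnitalCStarAlgebra B] [PartialOrder B]
    [StarOrderedRing B] {b t : B} (hb : 0 ≤ b) {M δ : ℝ} (hM : 0 ≤ M)
    (ht : t * star t ≤ M • b) {φ : ℝ → ℝ} (hφ : Continuous φ) (h0 : φ 0 = 0)
    (hδ : ∀ x, 0 ≤ x → x * (1 - φ x) ^ 2 ≤ δ) :
    ‖t - cfcₙ φ b * t‖ ^ 2 ≤ M * δ := by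
  have hbs : IsSelfAdjoint b := .of_nonneg hb
  set g := cfcₙ φ b with hg
  have hgs : star g = g := (IsSelfAdjoint.cfcₙ (f := φ) (a := b)).star_eq
  -- Writing the difference as `P * P` allows conjugation by `1 - g` without leaving `B`.
  set P := CFC.sqrt (M • b - t * star t) with hP
  have hPs : star P = P := (IsSelfAdjoint.of_nonneg (CFC.sqrt_nonneg _)).star_eq
  have hPP : P * P = M • b - t * star t := CFC.sqrt_mul_sqrt_self _ (sub_nonneg.2 ht)
  have key : (t - g * t) * star (t - g * t)
      ≤ M • (b - g * b - b * g + g * b * g) := by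
    have hv := mul_star_self_nonneg (P - g * P)
    rw [← sub_nonneg]
    convert hv using 1
    have : (P - g * P) * star (P - g * P) = P * P - g * (P * P) - P * P * g + g * (P * P) * g := by
      simp only [star_sub, star_mul, hPs, hgs]; noncomm_ring
    rw [this, hPP]
    simp only [star_sub, star_mul, hgs, smul_sub, smul_add, mul_sub, sub_mul, mul_smul_comm,
      smul_mul_assoc, mul_assoc]
    abel
  have hc : b - g * b - b * g + g * b * g = cfcₙ (fun x => x * (1 - φ x) ^ 2) b := by
    have e1 : (fun x : ℝ => x * (1 - φ x) ^ 2)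
        = fun x => ((x - φ x * x) - x * φ x) + (φ x * x) * φ x := by
      ext x; ring
    rw [e1, cfcₙ_add .., cfcₙ_sub .., cfcₙ_sub .., cfcₙ_mul .., cfcₙ_mul .., cfcₙ_mul ..,
      cfcₙ_mul .., cfcₙ_id' ..]
  calc ‖t - g * t‖ ^ 2 = ‖(t - g * t) * star (t - g * t)‖ := by
        rw [CStarRing.norm_self_mul_star, sq]
    _ ≤ ‖M • (b - g * b - b * g + g * b * g)‖ :=
        CStarAlgebra.norm_le_norm_of_nonneg_of_le (mul_star_self_nonneg _) key
    _ = M * ‖cfcₙ (fun x => x * (1 - φ x) ^ 2) b‖ := by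
        rw [norm_smul, Real.norm_of_nonneg hM, hc]
    _ ≤ M * δ := by
        gcongr
        refine norm_cfcₙ_le fun x hx => ?_
        have hx0 := quasispectrum_nonneg_of_nonneg b hb x hx
        rw [Real.norm_of_nonneg (by positivity)]
        exact hδ x hx0

/-- For `b ≥ 0` there is a selfadjoint `w` such that `w b w` acts almost as a unit on every `t` with
`t t⋆ ≤ M b`. The witness is `w = f(b)` with `f x = √x / (x + η)`. -/
theorem exists_conj_cut {B : Type*} [NonUnitalCStarAlgebra B] [PartialOrder B]
    [StarOrderedRing B] {b : B} (hb : 0 ≤ b) {η : ℝ} (hη : 0 < η) :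
    ∃ w : B, star w = w ∧ ∀ (M : ℝ) (t : B), 0 ≤ M → t * star t ≤ M • b →
      ‖t - w * b * w * t‖ ^ 2 ≤ M * η := by
  have hbs : IsSelfAdjoint b := .of_nonneg hb
  have hpos : ∀ x : ℝ, |x| + η ≠ 0 := fun x => by positivity
  -- The absolute values only serve to make `f` continuous on all of `ℝ`.
  set f : ℝ → ℝ := fun x => √|x| / (|x| + η) with hf
  have hfc : Continuous f := by
    refine Continuous.div (by fun_prop) (by fun_prop) hpos
  have hf0 : f 0 = 0 := by simp [hf]
  refine ⟨cfcₙ f b, (IsSelfAdjoint.cfcₙ (f := f) (a := b)).star_eq, fun M t hM ht => ?_⟩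
  have e : cfcₙ f b * b * cfcₙ f b = cfcₙ (fun x => f x * x * f x) b := by
    rw [cfcₙ_mul .., cfcₙ_mul .., cfcₙ_id' ..]
  rw [e]
  refine norm_sub_cfcn_mul_sq_le hb hM ht (by fun_prop) (by simp) fun x hx => ?_
  have h1 : f x * x * f x = x ^ 2 / (x + η) ^ 2 := by
    simp only [hf, abs_of_nonneg hx]
    have := Real.mul_self_sqrt hx
    field_simp
    rw [Real.sq_sqrt hx]
    ring
  have hxη : 0 < x + η := by positivity
  have h2 : x * (1 - x ^ 2 / (x + η) ^ 2) ^ 2 = x * (2 * x * η + η ^ 2) ^ 2 / (x + η) ^ 4 := by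
    field_simp; ring
  rw [h1, h2, div_le_iff₀ (by positivity)]
  nlinarith [mul_nonneg hx hη.le, mul_nonneg (mul_nonneg hx hη.le) (sq_nonneg (x - η)),
    pow_pos hη 5, mul_nonneg hx (pow_nonneg hη.le 4), mul_nonneg (pow_nonneg hx 2) (pow_nonneg hη.le 3), mul_nonneg (pow_nonneg hx 3) (pow_nonneg hη.le 2), mul_nonneg (pow_nonneg hx 4) hη.le, mul_nonneg hη.le (sq_nonneg (x*(x - η)))]

/-- Finitely many elements are almost fixed by left multiplication by some selfadjoint `g` that has a
positive local unit `e`. -/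
theorem exists_locally_unital {B : Type*} [NonUnitalCStarAlgebra B] [PartialOrder B]
    [StarOrderedRing B] {ι : Type*} [Fintype ι] (x : ι → B) {η : ℝ} (hη : 0 < η) :
    ∃ g e : B, star g = g ∧ 0 ≤ e ∧ e * g = g ∧ ∀ i, ‖x i - g * x i‖ ^ 2 ≤ η := by
  classical
  set b : B := ∑ i, x i * star (x i) with hbdef
  have hb : 0 ≤ b := Finset.sum_nonneg fun i _ => mul_star_self_nonneg _
  have hle : ∀ i, x i * star (x i) ≤ (1 : ℝ) • b := fun i => by
    rw [one_smul]
    exact Finset.single_le_sum (f := fun i => x i * star (x i))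
      (fun i _ => mul_star_self_nonneg _) (Finset.mem_univ i)
  -- `φ` vanishes on `[0, η/2]` and equals `1` on `[η, ∞)`, while `ψ = 1` on the support of `φ`.
  set φ : ℝ → ℝ := fun t => min 1 (max 0 (2 * t / η - 1)) with hφ
  set ψ : ℝ → ℝ := fun t => min 1 (max 0 (2 * t / η)) with hψ
  have hφc : Continuous φ := by fun_prop
  have hψc : Continuous ψ := by fun_prop
  have hφ0 : φ 0 = 0 := by simp [hφ]
  have hψ0 : ψ 0 = 0 := by simp [hψ]
  have hψφ : (fun t => ψ t * φ t) = φ := by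
    ext t
    simp only [hφ, hψ]
    rcases le_total (2 * t / η) 1 with h | h
    · rw [max_eq_left (by linarith : 2 * t / η - 1 ≤ 0)]; simp
    · rw [max_eq_right (by linarith : 0 ≤ 2 * t / η), min_eq_left h, one_mul]
  refine ⟨cfcₙ φ b, cfcₙ ψ b, (IsSelfAdjoint.cfcₙ (f := φ) (a := b)).star_eq,
    cfcₙ_nonneg fun t _ => by simp [hψ], ?_, fun i => ?_⟩
  · rw [← cfcₙ_mul .., hψφ]
  · rw [← one_mul η]
    refine norm_sub_cfcn_mul_sq_le (δ := η) hb zero_le_one (hle i) hφc hφ0 fun t ht => ?_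
    have h0 : 0 ≤ φ t := by simp [hφ]
    have h1 : φ t ≤ 1 := by simp [hφ]
    rcases le_total t η with h | h
    · exact (mul_le_of_le_one_right ht (pow_le_one₀ (by linarith) (by linarith))).trans h
    · have : φ t = 1 := by
        simp only [hφ]
        refine min_eq_left (le_max_of_le_right ?_)
        have : 2 ≤ 2 * t / η := by rw [le_div_iff₀ hη]; linarith
        linarith
      rw [this, sub_self, zero_pow two_ne_zero, mul_zero]; exact hη.le

/-! ### Comparison in a C⋆-algebra -/

/-- If `t t⋆ ≤ M b`, then `t⋆ t` is Cuntz subequivalent to `b`. -/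
theorem mem_closure_of_le {B : Type*} [NonUnitalCStarAlgebra B] [PartialOrder B]
    [StarOrderedRing B] {b t : B} (hb : 0 ≤ b) {M : ℝ} (hM : 0 ≤ M)
    (ht : t * star t ≤ M • b) :
    star t * t ∈ closure (Set.range fun x : B => star x * b * x) := by
  choose w hw hwt using fun k : ℕ => exists_conj_cut hb (η := 1 / ((k : ℝ) + 1)) (by positivity)
  have h1 : Tendsto (fun k => t - w k * b * w k * t) atTop (nhds 0) := by
    rw [tendsto_zero_iff_norm_tendsto_zero]
    have h2 : Tendsto (fun k => ‖t - w k * b * w k * t‖ ^ 2) atTop (nhds 0) := by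
      refine squeeze_zero (fun k => by positivity) (fun k => hwt k M t hM ht) ?_
      simpa using (tendsto_one_div_add_atTop_nhds_zero_nat (𝕜 := ℝ)).const_mul M
    simpa using h2.sqrt
  have h2 : Tendsto (fun k => star t * (w k * b * w k * t)) atTop (nhds (star t * t)) := by
    refine Tendsto.const_mul _ ?_
    simpa using (tendsto_const_nhds (x := t)).sub h1
  refine mem_closure_of_tendsto h2 (Eventually.of_forall fun k => ⟨w k * t, ?_⟩)
  simp only [star_mul, hw, mul_assoc]

theorem star_mul_self_mem_closure {B : Type*} [NonUnitalCStarAlgebra B] [PartialOrder B]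
    [StarOrderedRing B] (s : B) :
    star s * s ∈ closure (Set.range fun x : B => star x * (s * star s) * x) :=
  mem_closure_of_le (mul_star_self_nonneg s) zero_le_one (by rw [one_smul])

/-- If `‖r‖ ≤ 1/2`, then `c c⋆` is Cuntz subequivalent to `(c - r c)⋆ (c - r c)`, because
`c⋆ c ≤ 2 (c - r c)⋆ (c - r c) + 2 (r c)⋆ (r c)` and the last term is at most `c⋆ c / 2`. -/
theorem mul_star_self_mem_closure {B : Type*} [NonUnitalCStarAlgebra B] [PartialOrder B]
    [StarOrderedRing B] (c r : B) (hr : ‖r‖ ≤ 1 / 2) :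
    c * star c ∈ closure
      (Set.range fun x : B => star x * (star (c - r * c) * (c - r * c)) * x) := by
  have key : star c * star (star c) ≤ (4 : ℝ) • (star (c - r * c) * (c - r * c)) := by
    rw [star_star]
    have h1 : star c * c + star (c - 2 • (r * c)) * (c - 2 • (r * c))
        = 2 • (star (c - r * c) * (c - r * c)) + 2 • (star c * (star r * r) * c) := by
      simp only [star_sub, star_mul, star_nsmul]
      noncomm_ring
    have h2 : star c * (star r * r) * c ≤ (1 / 4 : ℝ) • (star c * c) := by
      refine (CStarAlgebra.star_left_conjugate_le_norm_smul (.star_mul_self r)).trans ?_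
      refine smul_le_smul_of_nonneg_right ?_ (star_mul_self_nonneg c)
      rw [CStarRing.norm_star_mul_self]
      nlinarith [norm_nonneg r]
    have h3 : star c * c ≤ 2 • (star (c - r * c) * (c - r * c)) + 2 • (star c * (star r * r) * c) :=
      h1 ▸ le_add_of_nonneg_right (star_mul_self_nonneg _)
    have h4 : star c * c ≤ 2 • (star (c - r * c) * (c - r * c)) + 2 • ((1 / 4 : ℝ) • (star c * c)) :=
      h3.trans (by gcongr)
    have h5 : (1 / 2 : ℝ) • (star c * c) ≤ (2 : ℝ) • (star (c - r * c) * (c - r * c)) := by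
      have e : 2 • ((1 / 4 : ℝ) • (star c * c)) = (1 / 2 : ℝ) • (star c * c) := by module
      rw [e] at h4
      have := sub_le_iff_le_add.2 h4
      have e2 : star c * c - (1 / 2 : ℝ) • (star c * c) = (1 / 2 : ℝ) • (star c * c) := by module
      rw [e2] at this
      convert this using 1
      module
    have h6 := smul_le_smul_of_nonneg_left h5 (zero_le_two (α := ℝ))
    rw [smul_smul, smul_smul] at h6
    norm_num only [one_smul] at h6
    exact h6
  simpa only [star_star] using mem_closure_of_le (star_mul_self_nonneg _) (by norm_num) key

/-! ### Cuntz subequivalence of matrices with arbitrary index types -/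

/-- Cuntz subequivalence `a ≾ b` of square matrices with arbitrary index types: `a` is a limit of
matrices `xᴴ * b * x`. The closure replaces the sequence of `CuntzLeMat`. -/
def CLe {C : Type*} [NonUnitalCStarAlgebra C] {ι κ : Type*} [Fintype κ]
    (a : Matrix ι ι C) (b : Matrix κ κ C) : Prop :=
  a ∈ closure (Set.range fun x : Matrix κ ι C => xᴴ * b * x)

section
variable {C : Type*} [NonUnitalCStarAlgebra C] {ι κ μ o : Type*} [Fintype κ] [Fintype μ]

theorem CLe.conj (b : Matrix κ κ C) (x : Matrix κ ι C) : CLe (xᴴ * b * x) b :=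
  subset_closure ⟨x, rfl⟩

theorem CLe.trans {a : Matrix ι ι C} {b : Matrix κ κ C} {c : Matrix μ μ C}
    (hab : CLe a b) (hbc : CLe b c) : CLe a c := by
  refine closure_minimal ?_ isClosed_closure hab
  rintro _ ⟨x, rfl⟩
  have hcont : Continuous fun y : Matrix κ κ C => xᴴ * y * x :=
    (continuous_const.matrix_mul continuous_id).matrix_mul continuous_const
  refine map_mem_closure (f := fun y : Matrix κ κ C => xᴴ * y * x) hcont hbc ?_
  rintro _ ⟨y, rfl⟩
  exact ⟨y * x, by simp only [conjTranspose_mul, Matrix.mul_assoc]⟩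

/-- `a ≾ b` implies `a ⊗ 1 ≾ b ⊗ 1`. -/
theorem CLe.blockDiagonal [Fintype o] [DecidableEq o] {a : Matrix ι ι C} {b : Matrix κ κ C}
    (hab : CLe a b) :
    CLe (blockDiagonal fun _ : o => a) (blockDiagonal fun _ : o => b) := by
  have hcont : Continuous fun y : Matrix ι ι C => Matrix.blockDiagonal fun _ : o => y :=
    Continuous.matrix_blockDiagonal (continuous_pi fun _ => continuous_id)
  refine map_mem_closure (f := fun y => Matrix.blockDiagonal fun _ : o => y) hcont hab ?_
  rintro _ ⟨x, rfl⟩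
  refine ⟨Matrix.blockDiagonal fun _ : o => x, ?_⟩
  simp only [blockDiagonal_conjTranspose, ← blockDiagonal_mul]

theorem CLe.submatrix_left {ι' : Type*} {a : Matrix ι ι C} {b : Matrix κ κ C}
    (hab : CLe a b) (f : ι' → ι) : CLe (a.submatrix f f) b := by
  have hcont : Continuous fun y : Matrix ι ι C => y.submatrix f f := by fun_prop
  refine map_mem_closure (f := fun y => y.submatrix f f) hcont hab ?_
  rintro _ ⟨x, rfl⟩
  exact ⟨x.submatrix id f, rfl⟩

theorem CLe.submatrix_right {a : Matrix ι ι C} {b : Matrix κ κ C}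
    (hab : CLe a b) (e : μ ≃ κ) : CLe a (b.submatrix e e) := by
  refine closure_mono ?_ hab
  rintro _ ⟨x, rfl⟩
  refine ⟨x.submatrix e id, ?_⟩
  simp only [conjTranspose_submatrix, submatrix_mul_equiv, submatrix_id_id]

end

/-! ### Comparison of `CLe` with `CuntzLeMat`, over `A` and over `Mₙ(A)` -/

theorem cuntzLeMat_iff_cle {C : Type*} [NonUnitalCStarAlgebra C] {p q : ℕ}
    (a : Matrix (Fin p) (Fin p) C) (b : Matrix (Fin q) (Fin q) C) :
    CuntzLeMat a b ↔ CLe a b := by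
  have : FirstCountableTopology (Matrix (Fin p) (Fin p) C) :=
    inferInstanceAs (FirstCountableTopology (Fin p → Fin p → C))
  unfold CLe CuntzLeMat
  rw [mem_closure_iff_seq_limit]
  constructor
  · rintro ⟨x, hx⟩
    exact ⟨_, fun k => ⟨x k, rfl⟩, hx⟩
  · rintro ⟨y, hy, hlim⟩
    choose x hx using hy
    exact ⟨x, by simpa only [hx] using hlim⟩

theorem comp_tensorOne {C : Type*} [Zero C] {n : ℕ} (a : Matrix (Fin n) (Fin n) C) (m : ℕ) :
    Matrix.comp _ _ _ _ C (tensorOne a m)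
      = (blockDiagonal fun _ : Fin m => a).submatrix Prod.swap Prod.swap := by
  ext ⟨i, k⟩ ⟨j, l⟩
  simp only [tensorOne, blockDiagonal_apply, diagonal_apply, submatrix_apply, Prod.swap,
    comp_apply]
  grind [Matrix.zero_apply]

theorem comp_conj {C : Type*} [NonUnitalCStarAlgebra C] {n p q : ℕ}
    (x : Matrix (Fin q) (Fin p) (Matrix (Fin n) (Fin n) C))
    (b : Matrix (Fin q) (Fin q) (Matrix (Fin n) (Fin n) C)) :
    Matrix.comp _ _ _ _ C (xᴴ * b * x)
      = (Matrix.comp _ _ _ _ C x)ᴴ * Matrix.comp _ _ _ _ C b * Matrix.comp _ _ _ _ C x := by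
  ext ⟨i, k⟩ ⟨j, l⟩
  simp only [comp_apply, Matrix.mul_apply, Matrix.sum_apply, conjTranspose_apply,
    Fintype.sum_prod_type, Finset.sum_mul, star_apply]
  refine Finset.sum_congr rfl fun _ _ => ?_
  rw [Finset.sum_comm]

/-- Cuntz subequivalence over `Mₙ(A)` is Cuntz subequivalence over `A` of the flattened matrices. -/
theorem cuntzLeMat_matrix_iff_cle {C : Type*} [NonUnitalCStarAlgebra C] {n p q : ℕ}
    (a : Matrix (Fin p) (Fin p) (Matrix (Fin n) (Fin n) C))
    (b : Matrix (Fin q) (Fin q) (Matrix (Fin n) (Fin n) C)) :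
    CuntzLeMat a b ↔ CLe (Matrix.comp _ _ _ _ C a) (Matrix.comp _ _ _ _ C b) := by
  have : FirstCountableTopology (Matrix (Fin p × Fin n) (Fin p × Fin n) C) :=
    inferInstanceAs (FirstCountableTopology (Fin p × Fin n → Fin p × Fin n → C))
  have hc : Continuous (Matrix.comp (Fin p) (Fin p) (Fin n) (Fin n) C) :=
    continuous_matrix fun i j => by
      simp only [comp_apply]
      exact (continuous_id.matrix_elem i.1 j.1).matrix_elem i.2 j.2
  have hc' : Continuous (Matrix.comp (Fin p) (Fin p) (Fin n) (Fin n) C).symm :=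
    continuous_matrix fun i j => continuous_matrix fun k l =>
      continuous_id.matrix_elem (i, k) (j, l)
  unfold CLe CuntzLeMat
  rw [mem_closure_iff_seq_limit]
  constructor
  · rintro ⟨x, hx⟩
    refine ⟨_, fun k => ⟨Matrix.comp _ _ _ _ C (x k), rfl⟩, ?_⟩
    simp only [← comp_conj]
    exact (hc.tendsto a).comp hx
  · rintro ⟨y, hy, hlim⟩
    choose x hx using hy
    refine ⟨fun k => (Matrix.comp _ _ _ _ C).symm (x k), ?_⟩
    have := (hc'.tendsto _).comp hlim
    rw [Equiv.symm_apply_apply] at this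
    refine this.congr fun k => ?_
    rw [Function.comp_apply, Equiv.symm_apply_eq, comp_conj, ← hx k]
    simp only [Equiv.apply_symm_apply]

/-! ### Comparison in `Mₙ(A)`

`CStarMatrix` carries the C⋆-norm of `Mₙ(A)` and, definitionally, the ring operations, the star and
the entrywise topology of `Matrix`. -/

theorem cle_star_mul_self {C : Type*} [NonUnitalCStarAlgebra C] [PartialOrder C]
    [StarOrderedRing C] {n : ℕ} (s : Matrix (Fin n) (Fin n) C) : CLe (sᴴ * s) (s * sᴴ) :=
  star_mul_self_mem_closure (CStarMatrix.ofMatrix s)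

theorem cle_mul_star_self {C : Type*} [NonUnitalCStarAlgebra C] [PartialOrder C]
    [StarOrderedRing C] {n : ℕ} (c r : Matrix (Fin n) (Fin n) C)
    (hr : ‖CStarMatrix.ofMatrix r‖ ≤ 1 / 2) :
    CLe (c * cᴴ) ((c - r * c)ᴴ * (c - r * c)) :=
  mul_star_self_mem_closure (CStarMatrix.ofMatrix c) (CStarMatrix.ofMatrix r) hr

theorem eq_zero_of_mul_conjTranspose {C : Type*} [NonUnitalCStarAlgebra C] [PartialOrder C]
    [StarOrderedRing C] {n : ℕ} {x : Matrix (Fin n) (Fin n) C} (h : x * xᴴ = 0) : x = 0 :=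
  (CStarRing.mul_star_self_eq_zero_iff (CStarMatrix.ofMatrix x)).1 h

/-! ### Property (S) -/

theorem PropS.propSMat {C : Type*} [NonUnitalCStarAlgebra C] [PartialOrder C]
    [StarOrderedRing C] (hS : PropS C) (n : ℕ) : PropSMat C n := by
  rintro a ⟨⟨s, rfl⟩, e, ⟨z, rfl⟩, hea⟩
  set e := zᴴ * z with he
  have hes : eᴴ = e := by simp [he, conjTranspose_mul]
  clear_value e
  have has : (sᴴ * s)ᴴ = sᴴ * s := by simp [conjTranspose_mul]
  have hae : sᴴ * s * e = sᴴ * s := by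
    have := congrArg conjTranspose hea
    rwa [conjTranspose_mul, has, hes] at this
  have hesH : e * sᴴ = sᴴ := by
    refine sub_eq_zero.1 (eq_zero_of_mul_conjTranspose ?_)
    have : (e * sᴴ - sᴴ) * (e * sᴴ - sᴴ)ᴴ
        = e * (sᴴ * s) * e - e * (sᴴ * s) - (sᴴ * s) * e + sᴴ * s := by
      simp only [conjTranspose_sub, conjTranspose_mul, conjTranspose_conjTranspose, hes, mul_sub,
        sub_mul, Matrix.mul_assoc]
      abel
    rw [this, hea, hae]; abel
  -- `g` is chosen from the entries of `e`; convergence of entries is convergence in the C⋆-norm.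
  obtain ⟨g, h, hg, hh, hhg, hge⟩ : ∃ g h : C, star g = g ∧ 0 ≤ h ∧ h * g = g ∧
      ‖CStarMatrix.ofMatrix (e - tensorOne g n * e)‖ ≤ 1 / 2 := by
    choose g h hg hh hhg hge using fun k : ℕ =>
      exists_locally_unital (fun i : Fin n × Fin n => e i.1 i.2)
        (η := 1 / ((k : ℝ) + 1)) (by positivity)
    have hlim : Tendsto (fun k => e - tensorOne (g k) n * e) atTop (nhds 0) := by
      refine tendsto_pi_nhds.2 fun i => tendsto_pi_nhds.2 fun j => ?_
      have h2 : Tendsto (fun k => ‖e i j - g k * e i j‖ ^ 2) atTop (nhds 0) :=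
        squeeze_zero (fun k => by positivity) (fun k => hge k (i, j))
          tendsto_one_div_add_atTop_nhds_zero_nat
      have h3 : Tendsto (fun k => ‖e i j - g k * e i j‖) atTop (nhds 0) := by simpa using h2.sqrt
      simpa [tensorOne, Matrix.diagonal_mul] using tendsto_zero_iff_norm_tendsto_zero.2 h3
    have hlim' : Tendsto (fun k => ‖CStarMatrix.ofMatrix (e - tensorOne (g k) n * e)‖) atTop
        (nhds 0) := by
      have : Tendsto (fun k => CStarMatrix.ofMatrix (e - tensorOne (g k) n * e)) atTop
        (nhds 0) := hlim
      exact tendsto_zero_iff_norm_tendsto_zero.1 this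
    obtain ⟨k, hk⟩ := (hlim'.eventually_le_const (by norm_num : (0 : ℝ) < 1 / 2)).exists
    exact ⟨g k, h k, hg k, hh k, hhg k, hk⟩
  have hf : g * g ∈ Fset C :=
    ⟨by simpa only [hg] using star_mul_self_nonneg g, h, hh, by rw [← mul_assoc, hhg]⟩
  obtain ⟨d, hd, hfd, k, hk⟩ := hS _ hf
  set σ := CFC.sqrt d with hσ
  have hσs : star σ = σ := (IsSelfAdjoint.of_nonneg (CFC.sqrt_nonneg d)).star_eq
  have hσσ : σ * σ = d := CFC.sqrt_mul_sqrt_self d hd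
  have hgd : g * d = 0 := by
    rw [← CStarRing.star_mul_self_eq_zero_iff, star_mul, hg, (IsSelfAdjoint.of_nonneg hd).star_eq,
      mul_assoc, ← mul_assoc g, hfd, mul_zero]
  have hgσ : g * σ = 0 := by
    rw [← CStarRing.mul_star_self_eq_zero_iff, star_mul, hg, hσs, mul_assoc, ← mul_assoc σ, hσσ,
      ← mul_assoc, hgd, zero_mul]
  set G := tensorOne g n with hG
  set S := tensorOne σ n with hSd
  have hGs : Gᴴ = G := by simp [hG, tensorOne, diagonal_conjTranspose, Pi.star_def, hg]
  have hSs : Sᴴ = S := by simp [hSd, tensorOne, diagonal_conjTranspose, Pi.star_def, hσs]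
  have hGG : G * G = tensorOne (g * g) n := by simp [hG, tensorOne]
  have hSS : S * S = tensorOne d n := by simp [hSd, tensorOne, hσσ]
  have hGS : G * S = 0 := by simp [hG, hSd, tensorOne, hgσ]
  have ha : CLe (sᴴ * s) (tensorOne (g * g) n) := by
    have h1 := cle_mul_star_self sᴴ (e - G * e) hge
    have e1 : sᴴ - (e - G * e) * sᴴ = G * sᴴ := by
      rw [sub_mul, Matrix.mul_assoc G, hesH]; abel
    rw [e1, conjTranspose_conjTranspose] at h1
    refine h1.trans ?_
    rw [← hGG]
    have := CLe.conj (G * G) sᴴ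
    simpa only [conjTranspose_mul, conjTranspose_conjTranspose, hGs, Matrix.mul_assoc] using this
  set q := S - e * S with hq
  have hd' : CLe (tensorOne d n) (q * qᴴ) := by
    have hr : ‖CStarMatrix.ofMatrix (e - e * G)‖ ≤ 1 / 2 := by
      have : e - e * G = (e - G * e)ᴴ := by
        simp only [conjTranspose_sub, conjTranspose_mul, hes, hGs]
      rw [this]
      exact (norm_star (CStarMatrix.ofMatrix (e - G * e))).trans_le hge
    have h1 := cle_mul_star_self S (e - e * G) hr
    have e1 : S - (e - e * G) * S = q := by
      rw [sub_mul, Matrix.mul_assoc e G, hGS, mul_zero, sub_zero]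
    rw [e1, hSs, hSS] at h1
    exact h1.trans (cle_star_mul_self q)
  refine ⟨q * qᴴ, ⟨qᴴ, by rw [conjTranspose_conjTranspose]⟩, ?_, k, ?_⟩
  · rw [← Matrix.mul_assoc, hq, mul_sub, ← Matrix.mul_assoc, hae, sub_self, zero_mul]
  rw [cuntzLeMat_matrix_iff_cle]
  rw [cuntzLeMat_iff_cle] at hk
  have h1 := (ha.blockDiagonal (o := Fin (k + 2))).submatrix_left Prod.swap
  have h2 := (hk.blockDiagonal (o := Fin n)).submatrix_left Prod.swap
  have h3 := (hd'.blockDiagonal (o := Fin (k + 1))).submatrix_left Prod.swap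
  -- The two sides differ only in the order of the tensor factors, hence by `Prod.swap` on indices.
  have h4 := (h1.trans (b := blockDiagonal fun _ : Fin (k + 2) => tensorOne (g * g) n)
    (c := blockDiagonal fun _ : Fin n => tensorOne d (k + 1)) ?_).trans
    (c := (Matrix.comp _ _ _ _ C (tensorOne (q * qᴴ) (k + 1)))) ?_
  · convert h4 using 1
    rw [comp_tensorOne]
  · convert h2 using 1
    ext ⟨i, k⟩ ⟨j, l⟩
    simp only [tensorOne, blockDiagonal_apply, diagonal_apply, submatrix_apply, Prod.swap]
    grind
  · rw [comp_tensorOne]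
    convert h3.submatrix_right (Equiv.prodComm _ _) using 1
    · ext ⟨i, k⟩ ⟨j, l⟩
      simp only [tensorOne, blockDiagonal_apply, diagonal_apply, submatrix_apply, Prod.swap]
      grind
    · rfl

theorem PropSMat.propS {C : Type*} [NonUnitalCStarAlgebra C] [PartialOrder C]
    [StarOrderedRing C] {n : ℕ} (hn : 0 < n) (hS : PropSMat C n) : PropS C := by
  have hpos : ∀ x : C, 0 ≤ x → MatPos C (tensorOne x n) := fun x hx => by
    refine ⟨tensorOne (CFC.sqrt x) n, ?_⟩
    simp [tensorOne, diagonal_conjTranspose, Pi.star_def,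
      (IsSelfAdjoint.of_nonneg (CFC.sqrt_nonneg x)).star_eq, CFC.sqrt_mul_sqrt_self x hx]
  rintro a ⟨ha, e, he, hea⟩
  obtain ⟨_, ⟨s, rfl⟩, had, k, hk⟩ := hS (tensorOne a n)
    ⟨hpos a ha, tensorOne e n, hpos e he, by simp [tensorOne, hea]⟩
  set b : C := ∑ i, (sᴴ * s) i i with hb
  have hb' : b = ∑ i, ∑ l, star (s l i) * s l i := by
    simp [hb, Matrix.mul_apply]
  have hb0 : 0 ≤ b := by
    rw [hb']
    exact Finset.sum_nonneg fun i _ => Finset.sum_nonneg fun l _ => star_mul_self_nonneg _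
  have hle : ∀ l i, star (s l i) * s l i ≤ b := fun l i => by
    rw [hb']
    refine (Finset.single_le_sum (f := fun l => star (s l i) * s l i)
      (fun _ _ => star_mul_self_nonneg _) (Finset.mem_univ l)).trans ?_
    exact Finset.single_le_sum (f := fun i => ∑ l, star (s l i) * s l i)
      (fun _ _ => Finset.sum_nonneg fun l _ => star_mul_self_nonneg _) (Finset.mem_univ i)
  have hab : a * b = 0 := by
    rw [hb, Finset.mul_sum]
    refine Finset.sum_eq_zero fun i _ => ?_
    have := congrFun (congrFun had i) i
    rwa [tensorOne, diagonal_mul] at this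
  -- The entries of `(w ⊗ 1) * sᴴ` are controlled by `hle`, so the comparison can be made entrywise.
  have h1 : CLe (s * sᴴ) (tensorOne b n) := by
    choose w hw hwt using fun k : ℕ => exists_conj_cut hb0 (η := 1 / ((k : ℝ) + 1)) (by positivity)
    have hlim : Tendsto (fun k => (tensorOne (w k) n * sᴴ)ᴴ * tensorOne b n *
        (tensorOne (w k) n * sᴴ)) atTop (nhds (s * sᴴ)) := by
      have hent : ∀ k i j, ((tensorOne (w k) n * sᴴ)ᴴ * tensorOne b n *
          (tensorOne (w k) n * sᴴ)) i j = ∑ l, s i l * (w k * b * w k * star (s j l)) := by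
        intro k i j
        simp [tensorOne, Matrix.mul_apply, diagonal_apply, hw, mul_assoc]
      refine tendsto_pi_nhds.2 fun i => tendsto_pi_nhds.2 fun j => ?_
      simp only [hent]
      rw [Matrix.mul_apply]
      refine tendsto_finsetSum _ fun l _ => Tendsto.const_mul _ ?_
      have h2 : Tendsto (fun k => ‖star (s j l) - w k * b * w k * star (s j l)‖ ^ 2) atTop
          (nhds 0) := by
        refine squeeze_zero (fun k => by positivity)
          (fun k => hwt k 1 (star (s j l)) zero_le_one (by simpa using hle j l)) ?_
        simpa using tendsto_one_div_add_atTop_nhds_zero_nat (𝕜 := ℝ)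
      have h3 : Tendsto (fun k => star (s j l) - w k * b * w k * star (s j l)) atTop (nhds 0) := by
        rw [tendsto_zero_iff_norm_tendsto_zero]
        simpa using h2.sqrt
      simpa using (tendsto_const_nhds (x := star (s j l))).sub h3
    exact mem_closure_of_tendsto hlim (Eventually.of_forall fun k => ⟨_, rfl⟩)
  have h2 : CLe (sᴴ * s) (tensorOne b n) := (cle_star_mul_self s).trans h1
  -- With `k + 1` copies of `D` and `N + 1 = (k + 1) * n`, one has `N + 2 ≤ (k + 2) * n`.
  obtain ⟨N, hN⟩ : ∃ N, N + 1 = (k + 1) * n :=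
    ⟨(k + 1) * n - 1, Nat.sub_add_cancel (Nat.mul_pos k.succ_pos hn)⟩
  have hN' : N + 2 ≤ (k + 2) * n := by nlinarith
  refine ⟨b, hb0, hab, N, ?_⟩
  rw [cuntzLeMat_iff_cle]
  rw [cuntzLeMat_matrix_iff_cle] at hk
  have h3 := (h2.blockDiagonal (o := Fin (k + 1))).submatrix_left Prod.swap
  have h4 : CLe (Matrix.comp _ _ _ _ C (tensorOne (sᴴ * s) (k + 1)))
      (blockDiagonal fun _ : Fin (k + 1) => tensorOne b n) := by
    rwa [comp_tensorOne]
  let ε : Fin (N + 1) ≃ Fin n × Fin (k + 1) :=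
    ((finCongr (hN.trans (mul_comm _ _))).trans finProdFinEquiv.symm)
  let f : Fin (N + 2) → Fin (k + 2) × Fin n := fun i => finProdFinEquiv.symm (Fin.castLE hN' i)
  have hf : Function.Injective f :=
    finProdFinEquiv.symm.injective.comp (Fin.castLE_injective hN')
  have h5 := ((hk.trans h4).submatrix_left f).submatrix_right ε
  convert h5 using 1
  · ext i j
    simp only [tensorOne, submatrix_apply, comp_apply, diagonal_apply]
    have := hf.eq_iff (a := i) (b := j)
    grind [Matrix.zero_apply, Matrix.diagonal_apply]
  · ext i j
    simp only [tensorOne, submatrix_apply, blockDiagonal_apply, diagonal_apply]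
    have := ε.injective.eq_iff (a := i) (b := j)
    grind

/-- Corollary 4.6: for a separable C*-algebra `A`, the following are equivalent:
(i) `A` has property (S); (ii) `Mₙ(A)` has property (S) for some `n ≥ 1`;
(iii) `Mₙ(A)` has property (S) for all `n ≥ 1`. -/
theorem propS_matrix_tfae [TopologicalSpace.SeparableSpace A] :
    List.TFAE
      [PropS A,
       ∃ n : ℕ, 0 < n ∧ PropSMat A n,
       ∀ n : ℕ, 0 < n → PropSMat A n] := by
  tfae_have 1 → 3 := fun h n _ => h.propSMat n
  tfae_have 3 → 2 := fun h => ⟨1, one_pos, h 1 one_pos⟩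
  tfae_have 2 → 1 := fun ⟨_, hn, h⟩ => h.propS hn
  tfae_finish

end Stmt18
end
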